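/- arXiv:1706.06928 — 2 statements merged into one kernel-verified Lean document; each statement's English description precedes it below -/
import Mathlib

section
/- Let N ≥ 1. Then for every u ∈ C_c^∞(ℝ^N) (smooth, compactly supported, real-valued), ‖u‖_∞ ≤ (√(ℓ_N) · ω_{N−1})^{−1} ∫_{ℝ^N} |∇^N u(x)| dx, where ‖u‖_∞ is the supremum norm of u. -/
open MeasureTheory Metric Filter Matrix

noncomputable section

/-- The mixed partial derivative `∂^m u / ∂x_{i 0} ⋯ ∂x_{i (m-1)} (x)`, realized as the
iterated Fréchet derivative applied to the corresponding standard basis vectors. -/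
def mixedPartial (N m : ℕ) (u : EuclideanSpace ℝ (Fin N) → ℝ)
    (i : Fin m → Fin N) (x : EuclideanSpace ℝ (Fin N)) : ℝ :=
  iteratedFDeriv ℝ m u x fun k => EuclideanSpace.single (i k) 1

/-- The Frobenius norm `|∇^m u (x)|` of the tensor of `m`-th order partial derivatives. -/
def gradNorm (N m : ℕ) (u : EuclideanSpace ℝ (Fin N) → ℝ)
    (x : EuclideanSpace ℝ (Fin N)) : ℝ :=
  Real.sqrt (∑ i : Fin m → Fin N, mixedPartial N m u i x ^ 2)

/-- The function `x ↦ log |x|`. -/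
def logNorm (N : ℕ) (x : EuclideanSpace ℝ (Fin N)) : ℝ := Real.log ‖x‖

/-- The constant `ℓ_N = ∑ (∂^N log|x|/∂x_{i_1}⋯∂x_{i_N} (e_1))²`. -/
def ell (N : ℕ) (hN : 0 < N) : ℝ :=
  ∑ i : Fin N → Fin N,
    mixedPartial N N (logNorm N) i (EuclideanSpace.single (⟨0, hN⟩ : Fin N) 1) ^ 2

/-- `ω_{N-1}`, the surface measure of the unit sphere `𝕊^{N-1} ⊂ ℝ^N`,
expressed as `N` times the volume of the unit ball. -/
def omegaSphere (N : ℕ) : ℝ :=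
  N * (volume (ball (0 : EuclideanSpace ℝ (Fin N)) 1)).toReal

/-!
Let `V = |x|^N ∇^N log|x|`. This tensor field is homogeneous of degree `0` and invariant under
rotations, so its length is the constant `√ℓ_N`. Away from the origin its `N`-fold divergence is
therefore rotation invariant and homogeneous of degree `-N`, hence of the form `c |x|^{-N}`, and
`c = 0` because dilated differences of `V` vanish at infinity. So the divergence is a multiple of
the Dirac mass at the origin: `∫ ⟨∇^N u, V⟩ = κ u(0)`. Since `⟨∇^N log|x|, V⟩ = ℓ_N |x|^{-N}`,
testing with dilated differences of a truncated logarithm yields `κ = -ℓ_N ω_{N-1}`.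
The Cauchy–Schwarz inequality gives the bound at the origin, and translation gives it everywhere.
-/

open Module (finrank finrank_pos)
open scoped ContDiff Topology

section Frobenius

variable {E ι ι' : Type*} [NormedAddCommGroup E] [Fintype ι] [Fintype ι']

theorem sum_apply_comp_mul_apply_comp_succ [NormedSpace ℝ E] {m : ℕ}
    (A B : ContinuousMultilinearMap ℝ (fun _ : Fin (m + 1) => E) ℝ) (e : ι → E) :
    ∑ i : Fin (m + 1) → ι, A (e ∘ i) * B (e ∘ i) =
      ∑ a, ∑ i : Fin m → ι, A.curryLeft (e a) (e ∘ i) * B.curryLeft (e a) (e ∘ i) := by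
  rw [← (Fin.consEquiv fun _ => ι).sum_comp, Fintype.sum_prod_type]
  simp [Fin.consEquiv, Fin.comp_cons]

variable [InnerProductSpace ℝ E]

theorem sum_dual_apply_mul_dual_apply [CompleteSpace E] (b : OrthonormalBasis ι ℝ E)
    (f g : StrongDual ℝ E) :
    ∑ i, f (b i) * g (b i) =
      inner ℝ ((InnerProductSpace.toDual ℝ E).symm f) ((InnerProductSpace.toDual ℝ E).symm g) := by
  rw [← b.sum_inner_mul_inner]
  simp only [InnerProductSpace.toDual_symm_apply, real_inner_comm _ (b _)]

theorem sum_apply_comp_mul_apply_comp_eq (b : OrthonormalBasis ι ℝ E)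
    (b' : OrthonormalBasis ι' ℝ E) {m : ℕ}
    (A B : ContinuousMultilinearMap ℝ (fun _ : Fin m => E) ℝ) :
    ∑ i : Fin m → ι, A (b ∘ i) * B (b ∘ i) = ∑ i : Fin m → ι', A (b' ∘ i) * B (b' ∘ i) := by
  have : FiniteDimensional ℝ E := b.toBasis.finiteDimensional_of_finite
  have : CompleteSpace E := FiniteDimensional.complete ℝ E
  induction m with
  | zero => simp [Subsingleton.elim (_ ∘ _) (default : Fin 0 → E)]
  | succ m ih =>
    have exchange_head (i : Fin m → ι') :
        ∑ a, A.curryLeft (b a) (b' ∘ i) * B.curryLeft (b a) (b' ∘ i) =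
          ∑ a, A.curryLeft (b' a) (b' ∘ i) * B.curryLeft (b' a) (b' ∘ i) := by
      let eval := ContinuousMultilinearMap.apply ℝ (fun _ : Fin m => E) ℝ (b' ∘ i)
      exact (sum_dual_apply_mul_dual_apply b (eval.comp A.curryLeft) (eval.comp B.curryLeft)).trans
        (sum_dual_apply_mul_dual_apply b' _ _).symm
    simp_rw [sum_apply_comp_mul_apply_comp_succ, ih]
    rw [Finset.sum_comm, Finset.sum_congr rfl fun i _ => exchange_head i, Finset.sum_comm]

end Frobenius

theorem iteratedFDeriv_comp_continuousLinearEquiv_apply {E F G : Type*}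
    [NormedAddCommGroup E] [NormedSpace ℝ E] [NormedAddCommGroup F] [NormedSpace ℝ F]
    [NormedAddCommGroup G] [NormedSpace ℝ G] (g : E ≃L[ℝ] F) (f : F → G) {m : ℕ} (x : E)
    (v : Fin m → E) :
    iteratedFDeriv ℝ m (f ∘ g) x v = iteratedFDeriv ℝ m f (g x) (g ∘ v) := by
  have := g.iteratedFDerivWithin_comp_right f uniqueDiffOn_univ (x := x) (Set.mem_univ _) m
  rw [Set.preimage_univ, iteratedFDerivWithin_univ, iteratedFDerivWithin_univ] at this
  rw [this]
  rfl

theorem iteratedDeriv_comp_smul_const {E F : Type*} [NormedAddCommGroup E] [NormedSpace ℝ E]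
    [NormedAddCommGroup F] [NormedSpace ℝ F] {f : E → F} {n : ℕ} (hf : ContDiff ℝ n f) (e : E)
    (t : ℝ) : iteratedDeriv n (fun s : ℝ => f (s • e)) t =
      iteratedFDeriv ℝ n f (t • e) fun _ => e := by
  have := ((1 : ℝ →L[ℝ] ℝ).smulRight e).iteratedFDeriv_comp_right hf t le_rfl
  rw [iteratedDeriv_eq_iteratedFDeriv]
  simpa [Function.comp_def] using congrArg (fun A => A fun _ => 1) this

theorem iteratedDeriv_log_ne_zero {n : ℕ} (hn : n ≠ 0) {t : ℝ} (ht : t ≠ 0) :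
    iteratedDeriv n Real.log t ≠ 0 := by
  obtain ⟨m, rfl⟩ := Nat.exists_eq_succ_of_ne_zero hn
  rw [iteratedDeriv_succ', Real.deriv_log', iteratedDeriv_eq_iterate, iter_deriv_inv]
  simp [Nat.factorial_ne_zero, ht, zpow_ne_zero]

theorem exists_linearIsometryEquiv_apply_eq {E : Type*} [NormedAddCommGroup E]
    [InnerProductSpace ℝ E] {x y : E} (h : ‖x‖ = ‖y‖) : ∃ R : E ≃ₗᵢ[ℝ] E, R x = y :=
  ⟨_, Submodule.reflection_sub h⟩

theorem exists_eq_mul_inv_norm_pow {E : Type*} [NormedAddCommGroup E] [InnerProductSpace ℝ E]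
    {G : E → ℝ} {d : ℕ} {r : ℝ} (hr : 0 ≤ r) (hiso : ∀ R : E ≃ₗᵢ[ℝ] E, G ∘ R = G)
    (hsmul : ∀ (l : ℝ) (x : E), 0 < l → r < ‖x‖ → r < ‖l • x‖ → l ^ d * G (l • x) = G x) :
    ∃ c, ∀ x, r < ‖x‖ → G x = c * (‖x‖ ^ d)⁻¹ := by
  by_cases! h : ∃ a : E, r < ‖a‖
  · obtain ⟨a, ha⟩ := h
    refine ⟨‖a‖ ^ d * G a, fun x hx => ?_⟩
    have ha₀ : 0 < ‖a‖ := hr.trans_lt ha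
    have hx₀ : 0 < ‖x‖ := hr.trans_lt hx
    have hnorm : ‖(‖x‖ / ‖a‖) • a‖ = ‖x‖ := by
      rw [norm_smul_of_nonneg (by positivity), div_mul_cancel₀ _ ha₀.ne']
    obtain ⟨R, hR⟩ := exists_linearIsometryEquiv_apply_eq hnorm.symm
    rw [← hsmul (‖x‖ / ‖a‖) a (by positivity) ha (hx.trans_eq hnorm.symm), ← hR,
      ← Function.comp_apply (f := G), hiso, div_pow]
    field_simp
  · exact ⟨0, fun x hx => absurd hx (h x).not_gt⟩

theorem tendsto_integral_comp_inv_smul_mul {E : Type*} [NormedAddCommGroup E] [NormedSpace ℝ E]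
    [MeasurableSpace E] [OpensMeasurableSpace E] {μ : Measure E} {u H : E → ℝ} {C : ℝ}
    (hu : Continuous u) (hb : ∀ x, ‖u x‖ ≤ C) (hH : Integrable H μ) :
    Tendsto (fun l : ℝ => ∫ x, u (l⁻¹ • x) * H x ∂μ) atTop (𝓝 (u 0 * ∫ x, H x ∂μ)) := by
  rw [← integral_const_mul]
  refine tendsto_integral_filter_of_dominated_convergence (fun x => C * ‖H x‖) ?_ ?_
    (hH.norm.const_mul C) (.of_forall fun x => ?_)
  · exact .of_forall fun l =>
      (hu.comp (continuous_const_smul l⁻¹)).aestronglyMeasurable.mul hH.aestronglyMeasurable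
  · exact .of_forall fun l => .of_forall fun x => (norm_mul _ _).trans_le
      (mul_le_mul_of_nonneg_right (hb _) (norm_nonneg _))
  · have : Tendsto (fun l : ℝ => l⁻¹ • x) atTop (𝓝 0) := by
      simpa using (tendsto_inv_atTop_zero (𝕜 := ℝ)).smul_const x
    exact ((hu.tendsto 0).comp this).mul_const _

section IntegrationByParts

variable {E : Type*} [NormedAddCommGroup E] [NormedSpace ℝ E] {m : ℕ} {u w : E → ℝ}

theorem contDiffAt_iteratedFDeriv_apply {n k : WithTop ℕ∞} {x : E} (hu : ContDiffAt ℝ n u x)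
    (hk : k + m ≤ n) (v : Fin m → E) :
    ContDiffAt ℝ k (fun x => iteratedFDeriv ℝ m u x v) x :=
  (ContinuousMultilinearMap.apply ℝ (fun _ : Fin m => E) ℝ v).contDiff.contDiffAt.comp x
    (hu.iteratedFDeriv_right hk)

theorem contDiff_iteratedFDeriv_apply {n k : WithTop ℕ∞} (hu : ContDiff ℝ n u) (hk : k + m ≤ n)
    (v : Fin m → E) : ContDiff ℝ k (fun x => iteratedFDeriv ℝ m u x v) :=
  (ContinuousMultilinearMap.apply ℝ (fun _ : Fin m => E) ℝ v).contDiff.comp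
    (hu.iteratedFDeriv_right hk)

theorem hasCompactSupport_iteratedFDeriv_apply (hu : HasCompactSupport u) (v : Fin m → E) :
    HasCompactSupport (fun x => iteratedFDeriv ℝ m u x v) :=
  (hu.iteratedFDeriv (𝕜 := ℝ) m).comp_left
    (map_zero (ContinuousMultilinearMap.apply ℝ (fun _ : Fin m => E) ℝ v))

variable [FiniteDimensional ℝ E] [MeasurableSpace E] [BorelSpace E]
  (μ : Measure E) [μ.IsAddHaarMeasure]

theorem integral_fderiv_mul_eq_neg (hu : ContDiff ℝ 1 u) (hw : ContDiff ℝ 1 w)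
    (hc : HasCompactSupport u ∨ HasCompactSupport w) (v : E) :
    ∫ x, fderiv ℝ u x v * w x ∂μ = -∫ x, u x * fderiv ℝ w x v ∂μ := by
  have hu' : Continuous fun x => fderiv ℝ u x v :=
    (hu.continuous_fderiv one_ne_zero).clm_apply continuous_const
  have hw' : Continuous fun x => fderiv ℝ w x v :=
    (hw.continuous_fderiv one_ne_zero).clm_apply continuous_const
  rw [integral_mul_fderiv_eq_neg_fderiv_mul_of_integrable, neg_neg]
  · exact (hu'.mul hw.continuous).integrable_of_hasCompactSupport
      (hc.elim (fun h => (h.fderiv_apply ℝ v).mul_right) fun h => h.mul_left)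
  · exact (hu.continuous.mul hw').integrable_of_hasCompactSupport
      (hc.elim (fun h => h.mul_right) fun h => (h.fderiv_apply ℝ v).mul_left)
  · exact (hu.continuous.mul hw.continuous).integrable_of_hasCompactSupport
      (hc.elim (fun h => h.mul_right) fun h => h.mul_left)
  · exact fun x _ => hu.differentiable one_ne_zero x
  · exact fun x _ => hw.differentiable one_ne_zero x

theorem integral_iteratedFDeriv_mul (hu : ContDiff ℝ m u) (hw : ContDiff ℝ m w)
    (hc : HasCompactSupport u ∨ HasCompactSupport w) (v : Fin m → E) :
    ∫ x, iteratedFDeriv ℝ m u x v * w x ∂μ =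
      (-1) ^ m * ∫ x, u x * iteratedFDeriv ℝ m w x (v ∘ Fin.rev) ∂μ := by
  induction m generalizing w with
  | zero => simp
  | succ m ih =>
    push_cast at hu hw
    have hw' : ContDiff ℝ m (fderiv ℝ w) := hw.fderiv_right le_rfl
    have peel_left (x : E) : iteratedFDeriv ℝ (m + 1) u x v =
        fderiv ℝ (fun y => iteratedFDeriv ℝ m u y (Fin.tail v)) x (v 0) :=
      ((hu.iteratedFDeriv_right (m := 1) (add_comm _ _).le).differentiable one_ne_zero x
        ).iteratedFDeriv_succ_apply_left'
    have peel_right (x : E) : iteratedFDeriv ℝ (m + 1) w x (v ∘ Fin.rev) =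
        iteratedFDeriv ℝ m (fun y => fderiv ℝ w y (v 0)) x (Fin.tail v ∘ Fin.rev) := by
      have init_rev : Fin.init (v ∘ Fin.rev) = Fin.tail v ∘ Fin.rev := by
        ext k
        exact congrArg v (Fin.rev_castSucc k)
      rw [iteratedFDeriv_succ_apply_right, iteratedFDeriv_clm_apply_const_apply hw' le_rfl,
        Function.comp_apply, Fin.rev_last, init_rev]
    simp_rw [peel_left, peel_right]
    rw [integral_fderiv_mul_eq_neg μ (contDiff_iteratedFDeriv_apply hu (add_comm _ _).le _)
        (hw.of_le le_add_self) (hc.imp_left fun h => hasCompactSupport_iteratedFDeriv_apply h _),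
      ih (hu.of_le le_self_add) (hw'.clm_apply contDiff_const)
        (hc.imp_right fun h => h.fderiv_apply ℝ _), pow_succ]
    ring

theorem integral_iteratedFDeriv_apply_eq_zero (hm : m ≠ 0) (hu : ContDiff ℝ m u)
    (hc : HasCompactSupport u) (v : Fin m → E) : ∫ x, iteratedFDeriv ℝ m u x v ∂μ = 0 := by
  have := integral_iteratedFDeriv_mul μ hu (contDiff_const (c := (1 : ℝ))) (.inl hc) v
  simpa [iteratedFDeriv_const_of_ne hm] using this

end IntegrationByParts

section Dilation

variable {E : Type*} [NormedAddCommGroup E] [NormedSpace ℝ E] [FiniteDimensional ℝ E]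
  [MeasurableSpace E] [BorelSpace E] (μ : Measure E) [μ.IsAddHaarMeasure]

theorem setIntegral_annulus_inv_norm_pow [Nontrivial E] {r : ℝ} (hr : 1 ≤ r) :
    ∫ x in closedBall 0 r \ closedBall 0 1, (‖x‖ ^ finrank ℝ E)⁻¹ ∂μ =
      finrank ℝ E * μ.real (ball 0 1) * Real.log r := by
  have radial (x : E) : (closedBall 0 r \ closedBall 0 1).indicator
      (fun x : E => (‖x‖ ^ finrank ℝ E)⁻¹) x =
        (Set.Ioc 1 r).indicator (fun t => (t ^ finrank ℝ E)⁻¹) ‖x‖ := by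
    simp [Set.indicator, and_comm]
  have weight (t : ℝ) : t ^ (finrank ℝ E - 1) •
      (Set.Ioc 1 r).indicator (fun t => (t ^ finrank ℝ E)⁻¹) t =
        (Set.Ioc 1 r).indicator (fun t => t⁻¹) t := by
    by_cases ht : t ∈ Set.Ioc 1 r
    · have : t ≠ 0 := (zero_lt_one.trans ht.1).ne'
      rw [Set.indicator_of_mem ht, Set.indicator_of_mem ht, smul_eq_mul,
        ← pow_sub_one_mul finrank_pos.ne' t, mul_inv, mul_inv_cancel_left₀ (pow_ne_zero _ this)]
    · simp [Set.indicator_of_notMem ht]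
  rw [← integral_indicator (measurableSet_closedBall.diff measurableSet_closedBall)]
  simp_rw [radial, integral_fun_norm_addHaar μ, weight]
  rw [setIntegral_indicator measurableSet_Ioc,
    Set.inter_eq_right.2 (Set.Ioc_subset_Ioi_self.trans (Set.Ioi_subset_Ioi zero_le_one)),
    ← intervalIntegral.integral_of_le hr, integral_inv_of_pos one_pos (by linarith)]
  simp [mul_assoc]

theorem integral_pow_mul_comp_smul_sub [Nontrivial E] {G : E → ℝ} (hG : Continuous G) {c r : ℝ}
    (hr : 1 ≤ r) (hfar : ∀ x, 1 < ‖x‖ → G x = c * (‖x‖ ^ finrank ℝ E)⁻¹) :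
    ∫ x, (r ^ finrank ℝ E * G (r • x) - G x) ∂μ =
      c * (finrank ℝ E * μ.real (ball 0 1) * Real.log r) := by
  have hr₀ : 0 < r := by linarith
  have vanish (x : E) (hx : x ∉ closedBall 0 1) : r ^ finrank ℝ E * G (r • x) - G x = 0 := by
    have hx : 1 < ‖x‖ := by simpa using hx
    have hrx : ‖r • x‖ = r * ‖x‖ := norm_smul_of_nonneg hr₀.le x
    rw [hfar x hx, hfar (r • x) (by nlinarith), hrx]
    field_simp
    ring
  have integrableOn {F : E → ℝ} (hF : Continuous F) (s : ℝ) : IntegrableOn F (closedBall 0 s) μ :=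
    hF.continuousOn.integrableOn_compact (isCompact_closedBall 0 s)
  have rescale : r ^ finrank ℝ E * ∫ x in closedBall 0 1, G (r • x) ∂μ =
      ∫ x in closedBall 0 r, G x ∂μ := by
    rw [Measure.setIntegral_comp_smul_of_pos μ G _ hr₀, smul_unitClosedBall,
      Real.norm_of_nonneg hr₀.le, smul_eq_mul, mul_inv_cancel_left₀ (by positivity)]
  have hGr : Continuous fun x => G (r • x) := hG.comp (continuous_const_smul r)
  rw [← setIntegral_eq_integral_of_forall_compl_eq_zero vanish,
    integral_sub ((integrableOn hGr 1).const_mul _) (integrableOn hG 1), integral_const_mul,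
    rescale,
    ← setIntegral_sdiff measurableSet_closedBall (integrableOn hG r)
      (closedBall_subset_closedBall hr),
    ← setIntegral_annulus_inv_norm_pow μ hr, ← integral_const_mul]
  exact setIntegral_congr_fun (measurableSet_closedBall.diff measurableSet_closedBall)
    fun x hx => hfar x (by simpa using hx.2)

end Dilation

section Cutoff

theorem contDiff_of_eventuallyEq_zero {E : Type*} [NormedAddCommGroup E] [NormedSpace ℝ E]
    {n : WithTop ℕ∞} {f : E → ℝ} {a : E} (ha : f =ᶠ[𝓝 a] 0) (hf : ∀ x ≠ a, ContDiffAt ℝ n f x) :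
    ContDiff ℝ n f := by
  refine contDiff_iff_contDiffAt.2 fun x => ?_
  rcases eq_or_ne x a with rfl | hx
  · exact contDiffAt_const.congr_of_eventuallyEq ha
  · exact hf x hx

variable {E : Type*} [NormedAddCommGroup E]

/-- A smooth radial function that equals `0` on the ball of radius `1/2`, increases with `‖x‖`, and
equals `1` off the unit ball. -/
def originCutoff (x : E) : ℝ := Real.smoothTransition (2 * ‖x‖ ^ 2 - 1)

theorem originCutoff_of_norm_le {x : E} (hx : ‖x‖ ≤ 1 / 2) : originCutoff x = 0 :=
  Real.smoothTransition.zero_of_nonpos (by nlinarith [norm_nonneg x])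

theorem originCutoff_of_one_le_norm {x : E} (hx : 1 ≤ ‖x‖) : originCutoff x = 1 :=
  Real.smoothTransition.one_of_one_le (by nlinarith)

theorem abs_originCutoff_le_one (x : E) : |originCutoff x| ≤ 1 :=
  (abs_of_nonneg (Real.smoothTransition.nonneg _)).trans_le (Real.smoothTransition.le_one _)

theorem originCutoff_eventuallyEq_zero : originCutoff =ᶠ[𝓝 (0 : E)] 0 := by
  filter_upwards [closedBall_mem_nhds (0 : E) one_half_pos] with x hx
  exact originCutoff_of_norm_le (mem_closedBall_zero_iff.1 hx)

theorem tendsto_originCutoff_smul [NormedSpace ℝ E] {x : E}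
    (hx : x ≠ 0) : Tendsto (fun l : ℝ => originCutoff (l • x)) atTop (𝓝 1) := by
  refine tendsto_const_nhds.congr' ?_
  filter_upwards [eventually_ge_atTop ‖x‖⁻¹] with l hl
  rw [originCutoff_of_one_le_norm]
  have hx₀ : 0 < ‖x‖ := norm_pos_iff.2 hx
  rw [norm_smul, Real.norm_of_nonneg ((inv_nonneg.2 hx₀.le).trans hl)]
  exact (inv_le_iff_one_le_mul₀ hx₀).1 hl

variable [InnerProductSpace ℝ E]

theorem contDiff_originCutoff {n : ℕ∞} : ContDiff ℝ n (originCutoff : E → ℝ) :=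
  Real.smoothTransition.contDiff.comp
    ((contDiff_const.mul (contDiff_norm_sq ℝ)).sub contDiff_const)

theorem contDiff_originCutoff_mul {n : ℕ∞} {f : E → ℝ} (hf : ∀ x ≠ 0, ContDiffAt ℝ n f x) :
    ContDiff ℝ n (fun x => originCutoff x * f x) := by
  refine contDiff_of_eventuallyEq_zero (a := 0) ?_ fun x hx =>
    contDiff_originCutoff.contDiffAt.mul (hf x hx)
  filter_upwards [originCutoff_eventuallyEq_zero] with x hx
  simp [hx]

end Cutoff

section Euclidean

variable {N : ℕ}

theorem omegaSphere_pos (hN : 0 < N) : 0 < omegaSphere N :=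
  mul_pos (by exact_mod_cast hN)
    (ENNReal.toReal_pos (measure_ball_pos volume _ one_pos).ne' measure_ball_lt_top.ne)

theorem integral_pow_mul_comp_smul_sub_euclideanSpace (hN : 0 < N)
    {G : EuclideanSpace ℝ (Fin N) → ℝ} (hG : Continuous G) {c r : ℝ} (hr : 1 ≤ r)
    (hfar : ∀ x, 1 < ‖x‖ → G x = c * (‖x‖ ^ N)⁻¹) :
    ∫ x, (r ^ N * G (r • x) - G x) = c * (omegaSphere N * Real.log r) := by
  have : Nonempty (Fin N) := ⟨⟨0, hN⟩⟩
  simpa only [finrank_euclideanSpace_fin, omegaSphere, Measure.real] using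
    integral_pow_mul_comp_smul_sub volume hG hr (by simpa only [finrank_euclideanSpace_fin])

end Euclidean

section MixedPartial

variable {N m : ℕ} {u w : EuclideanSpace ℝ (Fin N) → ℝ}
  {x : EuclideanSpace ℝ (Fin N)}

theorem mixedPartial_congr (h : u =ᶠ[𝓝 x] w) (i : Fin m → Fin N) :
    mixedPartial N m u i x = mixedPartial N m w i x :=
  congrArg (fun A => A fun k => EuclideanSpace.single (i k) 1) (h.iteratedFDeriv ℝ m).eq_of_nhds

theorem mixedPartial_sub (hu : ContDiffAt ℝ m u x) (hw : ContDiffAt ℝ m w x) (i : Fin m → Fin N) :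
    mixedPartial N m (fun y => u y - w y) i x =
      mixedPartial N m u i x - mixedPartial N m w i x := by
  rw [mixedPartial, fun_iteratedFDeriv_sub_apply hu hw]
  rfl

theorem mixedPartial_const (hm : m ≠ 0) (c : ℝ) (i : Fin m → Fin N) :
    mixedPartial N m (fun _ => c) i x = 0 := by
  simp [mixedPartial, iteratedFDeriv_const_of_ne hm]

theorem mixedPartial_add_const (hm : m ≠ 0) (hu : ContDiffAt ℝ m u x) (c : ℝ)
    (i : Fin m → Fin N) : mixedPartial N m (fun y => u y + c) i x = mixedPartial N m u i x := by
  rw [mixedPartial, fun_iteratedFDeriv_add_apply hu contDiffAt_const,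
    iteratedFDeriv_const_of_ne hm, Pi.zero_apply, add_zero, mixedPartial]

theorem mixedPartial_comp_smul {l : ℝ} (hl : l ≠ 0) (u : EuclideanSpace ℝ (Fin N) → ℝ)
    (i : Fin m → Fin N) (x : EuclideanSpace ℝ (Fin N)) :
    mixedPartial N m (fun y => u (l • y)) i x = l ^ m * mixedPartial N m u i (l • x) := by
  refine (iteratedFDeriv_comp_continuousLinearEquiv_apply
    (ContinuousLinearEquiv.smulLeft (Units.mk0 l hl)) u x _).trans ?_
  refine ((iteratedFDeriv ℝ m u (l • x)).map_smul_univ (fun _ => l) _).trans ?_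
  simp [mixedPartial]

theorem sum_mixedPartial_mul_mixedPartial_comp_isometry (u w : EuclideanSpace ℝ (Fin N) → ℝ)
    (R : EuclideanSpace ℝ (Fin N) ≃ₗᵢ[ℝ] EuclideanSpace ℝ (Fin N)) :
    ∑ i : Fin m → Fin N, mixedPartial N m (u ∘ R) i x * mixedPartial N m (w ∘ R) i x =
      ∑ i : Fin m → Fin N, mixedPartial N m u i (R x) * mixedPartial N m w i (R x) := by
  let e := EuclideanSpace.basisFun (Fin N) ℝ
  have transport (f : EuclideanSpace ℝ (Fin N) → ℝ) (i : Fin m → Fin N) :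
      mixedPartial N m (f ∘ R) i x = iteratedFDeriv ℝ m f (R x) (e.map R ∘ i) := by
    refine (iteratedFDeriv_comp_continuousLinearEquiv_apply
      R.toContinuousLinearEquiv f x _).trans ?_
    congr 1
    ext1 k
    simp [e]
  have standard (f : EuclideanSpace ℝ (Fin N) → ℝ) (i : Fin m → Fin N) :
      mixedPartial N m f i (R x) = iteratedFDeriv ℝ m f (R x) (e ∘ i) := by
    simp only [mixedPartial, e, Function.comp_def, EuclideanSpace.basisFun_apply]
  simp_rw [transport, standard]
  exact sum_apply_comp_mul_apply_comp_eq _ _ _ _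

theorem continuous_mixedPartial (hu : ContDiff ℝ m u) (i : Fin m → Fin N) :
    Continuous (mixedPartial N m u i) :=
  (contDiff_iteratedFDeriv_apply (k := 0) hu (zero_add _).le _).continuous

theorem continuous_gradNorm (hu : ContDiff ℝ m u) : Continuous (gradNorm N m u) :=
  (continuous_finsetSum _ fun i _ => (continuous_mixedPartial hu i).pow 2).sqrt

theorem hasCompactSupport_gradNorm (hu : HasCompactSupport u) :
    HasCompactSupport (gradNorm N m u) :=
  (hu.iteratedFDeriv (𝕜 := ℝ) m).comp_left
    (g := fun A : ContinuousMultilinearMap ℝ (fun _ : Fin m => EuclideanSpace ℝ (Fin N)) ℝ =>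
      √(∑ i : Fin m → Fin N, A (fun k => EuclideanSpace.single (i k) 1) ^ 2))
    (by simp [-Fintype.card_pi])

theorem integrable_gradNorm (hu : ContDiff ℝ m u) (hc : HasCompactSupport u) :
    Integrable (gradNorm N m u) :=
  (continuous_gradNorm hu).integrable_of_hasCompactSupport (hasCompactSupport_gradNorm hc)

theorem gradNorm_comp_add_right (u : EuclideanSpace ℝ (Fin N) → ℝ)
    (a x : EuclideanSpace ℝ (Fin N)) :
    gradNorm N m (fun y => u (y + a)) x = gradNorm N m u (x + a) := by
  simp only [gradNorm, mixedPartial, iteratedFDeriv_comp_add_right]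

end MixedPartial

section LogGradient

variable {N : ℕ} {x : EuclideanSpace ℝ (Fin N)}

theorem contDiffAt_logNorm {n : WithTop ℕ∞} (hx : x ≠ 0) : ContDiffAt ℝ n (logNorm N) x :=
  (contDiffAt_norm ℝ hx).log (norm_ne_zero_iff.2 hx)

theorem logNorm_smul {l : ℝ} (hl : l ≠ 0) (hx : x ≠ 0) :
    logNorm N (l • x) = logNorm N x + Real.log l := by
  rw [logNorm, norm_smul, Real.log_mul (norm_ne_zero_iff.2 hl) (norm_ne_zero_iff.2 hx),
    Real.norm_eq_abs, Real.log_abs, logNorm, add_comm]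

theorem logNorm_comp_isometry (R : EuclideanSpace ℝ (Fin N) ≃ₗᵢ[ℝ] EuclideanSpace ℝ (Fin N)) :
    logNorm N ∘ R = logNorm N := by
  ext x
  simp [logNorm]

theorem pow_mul_mixedPartial_logNorm_smul {m : ℕ} (hm : m ≠ 0) (i : Fin m → Fin N) {l : ℝ}
    (hl : l ≠ 0) (hx : x ≠ 0) :
    l ^ m * mixedPartial N m (logNorm N) i (l • x) = mixedPartial N m (logNorm N) i x := by
  rw [← mixedPartial_comp_smul hl, ← mixedPartial_add_const hm (contDiffAt_logNorm hx) (Real.log l)]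
  refine mixedPartial_congr ?_ i
  filter_upwards [isOpen_ne.mem_nhds hx] with y hy using logNorm_smul hl hy

/-- The components of `|x|^N ∇^N log|x|`, a tensor field that is homogeneous of degree `0`.
Its value at the origin is the junk value `0` when `N ≠ 0`. -/
def normalizedLogGrad (N : ℕ) (i : Fin N → Fin N) (x : EuclideanSpace ℝ (Fin N)) : ℝ :=
  ‖x‖ ^ N * mixedPartial N N (logNorm N) i x

theorem contDiffAt_normalizedLogGrad {n : ℕ∞} (i : Fin N → Fin N) (hx : x ≠ 0) :
    ContDiffAt ℝ n (normalizedLogGrad N i) x :=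
  ((contDiffAt_norm ℝ hx).pow N).mul
    (contDiffAt_iteratedFDeriv_apply (contDiffAt_logNorm (n := n + N) hx) le_rfl _)

theorem normalizedLogGrad_smul (hN : 0 < N) (i : Fin N → Fin N) {l : ℝ} (hl : 0 < l)
    (x : EuclideanSpace ℝ (Fin N)) : normalizedLogGrad N i (l • x) = normalizedLogGrad N i x := by
  rcases eq_or_ne x 0 with rfl | hx
  · rw [smul_zero]
  · rw [normalizedLogGrad, norm_smul_of_nonneg hl.le, mul_pow, mul_comm (l ^ N), mul_assoc,
      pow_mul_mixedPartial_logNorm_smul hN.ne' i hl.ne' hx, normalizedLogGrad]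

/-- The pairing of `∇^N u` with the tensor field `normalizedLogGrad`. -/
def logPairing (N : ℕ) (u : EuclideanSpace ℝ (Fin N) → ℝ) (x : EuclideanSpace ℝ (Fin N)) : ℝ :=
  ∑ i, mixedPartial N N u i x * normalizedLogGrad N i x

variable {u w : EuclideanSpace ℝ (Fin N) → ℝ}

theorem logPairing_congr (h : u =ᶠ[𝓝 x] w) : logPairing N u x = logPairing N w x := by
  simp only [logPairing, mixedPartial_congr h]

theorem contDiffAt_logPairing {n : ℕ∞} {k : WithTop ℕ∞} (hu : ContDiffAt ℝ k u x)
    (hk : n + N ≤ k) (hx : x ≠ 0) : ContDiffAt ℝ n (logPairing N u) x :=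
  ContDiffAt.sum fun i _ => (contDiffAt_iteratedFDeriv_apply hu hk _).mul
    (contDiffAt_normalizedLogGrad i hx)

theorem logPairing_sub (hu : ContDiffAt ℝ N u x) (hw : ContDiffAt ℝ N w x) :
    logPairing N (fun y => u y - w y) x = logPairing N u x - logPairing N w x := by
  simp only [logPairing, mixedPartial_sub hu hw, sub_mul, Finset.sum_sub_distrib]

theorem logPairing_add_const (hN : 0 < N) (hu : ContDiffAt ℝ N u x) (c : ℝ) :
    logPairing N (fun y => u y + c) x = logPairing N u x := by
  simp only [logPairing, mixedPartial_add_const hN.ne' hu]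

theorem logPairing_comp_smul (hN : 0 < N) (u : EuclideanSpace ℝ (Fin N) → ℝ) {l : ℝ}
    (hl : 0 < l) (x : EuclideanSpace ℝ (Fin N)) :
    logPairing N (fun y => u (l • y)) x = l ^ N * logPairing N u (l • x) := by
  simp only [logPairing, mixedPartial_comp_smul hl.ne', normalizedLogGrad_smul hN _ hl,
    Finset.mul_sum, mul_assoc]

theorem logPairing_comp_isometry (u : EuclideanSpace ℝ (Fin N) → ℝ)
    (R : EuclideanSpace ℝ (Fin N) ≃ₗᵢ[ℝ] EuclideanSpace ℝ (Fin N)) (x : EuclideanSpace ℝ (Fin N)) :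
    logPairing N (u ∘ R) x = logPairing N u (R x) := by
  have rotate := sum_mixedPartial_mul_mixedPartial_comp_isometry (m := N) u (logNorm N) R (x := x)
  rw [logNorm_comp_isometry] at rotate
  simp only [logPairing, normalizedLogGrad, R.norm_map, mul_left_comm _ (‖x‖ ^ N),
    ← Finset.mul_sum, rotate]

theorem sum_normalizedLogGrad_sq (hN : 0 < N) (hx : x ≠ 0) :
    ∑ i, normalizedLogGrad N i x ^ 2 = ell N hN := by
  let e : EuclideanSpace ℝ (Fin N) := EuclideanSpace.single ⟨0, hN⟩ 1
  obtain ⟨R, hR⟩ := exists_linearIsometryEquiv_apply_eq (x := x) (y := ‖x‖ • e)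
    (by simp [e, norm_smul])
  have eq_logPairing (y : EuclideanSpace ℝ (Fin N)) :
      ∑ i, normalizedLogGrad N i y ^ 2 = ‖y‖ ^ N * logPairing N (logNorm N) y := by
    simp only [logPairing, Finset.mul_sum, normalizedLogGrad]
    exact Finset.sum_congr rfl fun i _ => by ring
  calc ∑ i, normalizedLogGrad N i x ^ 2
      = ∑ i, normalizedLogGrad N i (‖x‖ • e) ^ 2 := by
        rw [eq_logPairing, eq_logPairing, ← hR, R.norm_map, ← logPairing_comp_isometry,
          logNorm_comp_isometry]
    _ = ∑ i, normalizedLogGrad N i e ^ 2 := by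
        simp only [normalizedLogGrad_smul hN _ (norm_pos_iff.2 hx)]
    _ = ell N hN := by simp [normalizedLogGrad, e, ell]

theorem logPairing_logNorm (hN : 0 < N) (hx : x ≠ 0) :
    logPairing N (logNorm N) x = ell N hN * (‖x‖ ^ N)⁻¹ := by
  rw [← sum_normalizedLogGrad_sq hN hx, Finset.sum_mul]
  refine Finset.sum_congr rfl fun i _ => ?_
  have : ‖x‖ ≠ 0 := norm_ne_zero_iff.2 hx
  rw [normalizedLogGrad]
  field_simp

theorem logPairing_apply_zero (hN : 0 < N) (u : EuclideanSpace ℝ (Fin N) → ℝ) :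
    logPairing N u 0 = 0 := by
  simp [logPairing, normalizedLogGrad, hN.ne']

theorem abs_logPairing_le (hN : 0 < N) (u : EuclideanSpace ℝ (Fin N) → ℝ)
    (x : EuclideanSpace ℝ (Fin N)) : |logPairing N u x| ≤ √(ell N hN) * gradNorm N N u x := by
  rcases eq_or_ne x 0 with rfl | hx
  · rw [logPairing_apply_zero hN, abs_zero]
    exact mul_nonneg (Real.sqrt_nonneg _) (Real.sqrt_nonneg _)
  · rw [← sum_normalizedLogGrad_sq hN hx, mul_comm, gradNorm, ← Real.sqrt_mul (by positivity)]
    exact Real.abs_le_sqrt (Finset.sum_mul_sq_le_sq_mul_sq _ _ _)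

end LogGradient

section TruncatedField

variable {N : ℕ} {u : EuclideanSpace ℝ (Fin N) → ℝ} {x : EuclideanSpace ℝ (Fin N)}

/-- The smooth tensor field on all of `ℝ^N` obtained from `normalizedLogGrad` by cutting off its
singularity at the origin. -/
def truncLogGrad (N : ℕ) (i : Fin N → Fin N) (x : EuclideanSpace ℝ (Fin N)) : ℝ :=
  originCutoff x * normalizedLogGrad N i x

/-- The `N`-fold divergence of `truncLogGrad` with the sign `(-1)^N`, that is, the function
representing `u ↦ ∫ ⟨∇^N u, truncLogGrad⟩`. The multi-index is reversed because integration by parts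
reverses the order of differentiation. -/
def truncLogDiv (N : ℕ) (x : EuclideanSpace ℝ (Fin N)) : ℝ :=
  (-1) ^ N * ∑ i, mixedPartial N N (truncLogGrad N i) (i ∘ Fin.rev) x

theorem contDiff_truncLogGrad {n : ℕ∞} (i : Fin N → Fin N) : ContDiff ℝ n (truncLogGrad N i) :=
  contDiff_originCutoff_mul fun _ hx => contDiffAt_normalizedLogGrad i hx

theorem truncLogGrad_smul (hN : 0 < N) (i : Fin N → Fin N) {l : ℝ} (hl : 0 < l) (hx : 1 ≤ ‖x‖)
    (hlx : 1 ≤ ‖l • x‖) : truncLogGrad N i (l • x) = truncLogGrad N i x := by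
  rw [truncLogGrad, truncLogGrad, originCutoff_of_one_le_norm hx, originCutoff_of_one_le_norm hlx,
    normalizedLogGrad_smul hN i hl]

theorem continuous_truncLogDiv : Continuous (truncLogDiv N) :=
  continuous_const.mul (continuous_finsetSum _ fun i _ =>
    continuous_mixedPartial (contDiff_truncLogGrad i) _)

theorem originCutoff_mul_logPairing (u : EuclideanSpace ℝ (Fin N) → ℝ)
    (x : EuclideanSpace ℝ (Fin N)) : originCutoff x * logPairing N u x =
      ∑ i, mixedPartial N N u i x * truncLogGrad N i x := by
  simp only [logPairing, truncLogGrad, Finset.mul_sum, mul_left_comm]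

theorem continuous_originCutoff_mul_logPairing (hu : ContDiff ℝ N u) :
    Continuous fun x => originCutoff x * logPairing N u x := by
  simp_rw [originCutoff_mul_logPairing]
  exact continuous_finsetSum _ fun i _ => (continuous_mixedPartial hu i).mul
    (contDiff_truncLogGrad (n := 0) i).continuous

theorem integral_originCutoff_mul_logPairing (hu : ContDiff ℝ N u) (hc : HasCompactSupport u) :
    ∫ x, originCutoff x * logPairing N u x = ∫ x, u x * truncLogDiv N x := by
  have expand (x : EuclideanSpace ℝ (Fin N)) : u x * truncLogDiv N x =
      (-1) ^ N * ∑ i, u x * mixedPartial N N (truncLogGrad N i) (i ∘ Fin.rev) x := by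
    rw [truncLogDiv, mul_left_comm, Finset.mul_sum]
  simp_rw [originCutoff_mul_logPairing, expand]
  rw [integral_const_mul, integral_finsetSum, integral_finsetSum, Finset.mul_sum]
  · exact Finset.sum_congr rfl fun i _ => integral_iteratedFDeriv_mul volume hu
      (contDiff_truncLogGrad i) (.inl hc) _
  · exact fun i _ => (hu.continuous.mul (continuous_mixedPartial (contDiff_truncLogGrad i) _)
      ).integrable_of_hasCompactSupport hc.mul_right
  · exact fun i _ => ((continuous_mixedPartial hu i).mul
      (contDiff_truncLogGrad (n := 0) i).continuous).integrable_of_hasCompactSupport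
      (hasCompactSupport_iteratedFDeriv_apply hc _).mul_right

theorem originCutoff_smul_mul_logPairing (hN : 0 < N) (u : EuclideanSpace ℝ (Fin N) → ℝ) {l : ℝ}
    (hl : 0 < l) (x : EuclideanSpace ℝ (Fin N)) :
    originCutoff (l • x) * logPairing N u x =
      l ^ N * (originCutoff (l • x) * logPairing N (fun y => u (l⁻¹ • y)) (l • x)) := by
  rw [logPairing_comp_smul hN u (inv_pos.2 hl), inv_smul_smul₀ hl.ne', inv_pow]
  field_simp

theorem integral_originCutoff_smul_mul_logPairing (hN : 0 < N) (hu : ContDiff ℝ N u)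
    (hc : HasCompactSupport u) {l : ℝ} (hl : 0 < l) :
    ∫ x, originCutoff (l • x) * logPairing N u x = ∫ x, u (l⁻¹ • x) * truncLogDiv N x := by
  let v (y : EuclideanSpace ℝ (Fin N)) : ℝ := u (l⁻¹ • y)
  calc ∫ x, originCutoff (l • x) * logPairing N u x
      = l ^ N * ∫ x, originCutoff (l • x) * logPairing N v (l • x) := by
        simp_rw [originCutoff_smul_mul_logPairing hN u hl, integral_const_mul, v]
    _ = ∫ x, originCutoff x * logPairing N v x := by
        rw [Measure.integral_comp_smul_of_nonneg volume
            (fun x => originCutoff x * logPairing N v x) l (hR := hl.le),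
          finrank_euclideanSpace_fin, smul_eq_mul, mul_inv_cancel_left₀ (by positivity)]
    _ = ∫ x, v x * truncLogDiv N x :=
        integral_originCutoff_mul_logPairing (hu.comp (contDiff_const_smul l⁻¹))
          (hc.comp_smul (inv_ne_zero hl.ne'))

theorem truncLogDiv_comp_isometry (R : EuclideanSpace ℝ (Fin N) ≃ₗᵢ[ℝ] EuclideanSpace ℝ (Fin N)) :
    truncLogDiv N ∘ R = truncLogDiv N := by
  have hR : Continuous (truncLogDiv N ∘ R) := continuous_truncLogDiv.comp R.continuous
  refine (hR.ae_eq_iff_eq volume continuous_truncLogDiv).1 <| ae_eq_of_integral_contDiff_smul_eq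
    hR.locallyIntegrable continuous_truncLogDiv.locallyIntegrable fun g hg hc => ?_
  have hg : ContDiff ℝ N g := hg.of_le (by exact_mod_cast le_top)
  let v := g ∘ R.symm
  have hv : ContDiff ℝ N v := hg.comp R.symm.contDiff
  have hvc : HasCompactSupport v := hc.comp_homeomorph R.symm.toHomeomorph
  have hgv : g = v ∘ R := by ext x; simp [v]
  have comp_isometry (F : EuclideanSpace ℝ (Fin N) → ℝ) : ∫ x, F (R x) = ∫ x, F x :=
    R.measurePreserving.integral_comp R.toHomeomorph.measurableEmbedding F
  calc ∫ x, g x * truncLogDiv N (R x) = ∫ x, v x * truncLogDiv N x := by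
        rw [← comp_isometry fun x => v x * truncLogDiv N x, hgv]
        rfl
    _ = ∫ x, originCutoff x * logPairing N v x := (integral_originCutoff_mul_logPairing hv hvc).symm
    _ = ∫ x, originCutoff x * logPairing N g x := by
        rw [← comp_isometry fun x => originCutoff x * logPairing N v x, hgv]
        simp only [logPairing_comp_isometry, originCutoff, R.norm_map]
    _ = ∫ x, g x * truncLogDiv N x := integral_originCutoff_mul_logPairing hg hc

theorem pow_mul_truncLogDiv_smul (hN : 0 < N) {l : ℝ} (hl : 0 < l) (hx : 1 < ‖x‖)
    (hlx : 1 < ‖l • x‖) : l ^ N * truncLogDiv N (l • x) = truncLogDiv N x := by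
  simp only [truncLogDiv, mul_left_comm (l ^ N), Finset.mul_sum, ← mixedPartial_comp_smul hl.ne']
  refine Finset.sum_congr rfl fun i _ => congrArg _ (mixedPartial_congr ?_ _)
  filter_upwards [continuous_norm.continuousAt.eventually_const_lt hx,
    (continuous_const_smul l).norm.continuousAt.eventually_const_lt hlx] with y hy hly
    using truncLogGrad_smul hN i hl hy.le hly.le

theorem hasCompactSupport_truncLogGrad_comp_smul_sub (hN : 0 < N) (i : Fin N → Fin N) {l : ℝ}
    (hl : 1 ≤ l) : HasCompactSupport fun x => truncLogGrad N i (l • x) - truncLogGrad N i x := by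
  refine HasCompactSupport.intro (isCompact_closedBall 0 1) fun x hx => sub_eq_zero.2 ?_
  have hx : 1 < ‖x‖ := by simpa using hx
  refine truncLogGrad_smul hN i (by linarith) hx.le ?_
  rw [norm_smul_of_nonneg (by linarith)]
  nlinarith

theorem integral_pow_mul_truncLogDiv_smul_sub (hN : 0 < N) {l : ℝ} (hl : 1 ≤ l) :
    ∫ x, (l ^ N * truncLogDiv N (l • x) - truncLogDiv N x) = 0 := by
  let D (i : Fin N → Fin N) (x : EuclideanSpace ℝ (Fin N)) : ℝ :=
    truncLogGrad N i (l • x) - truncLogGrad N i x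
  have hDil (i : Fin N → Fin N) : ContDiff ℝ N fun x => truncLogGrad N i (l • x) :=
    (contDiff_truncLogGrad i).comp (contDiff_const_smul l)
  have hD (i : Fin N → Fin N) : ContDiff ℝ N (D i) := (hDil i).sub (contDiff_truncLogGrad i)
  have hDc (i : Fin N → Fin N) : HasCompactSupport (D i) :=
    hasCompactSupport_truncLogGrad_comp_smul_sub hN i hl
  have eq_sum (x : EuclideanSpace ℝ (Fin N)) : l ^ N * truncLogDiv N (l • x) - truncLogDiv N x =
      (-1) ^ N * ∑ i, mixedPartial N N (D i) (i ∘ Fin.rev) x := by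
    simp only [D, truncLogDiv, mixedPartial_sub (hDil _).contDiffAt
      (contDiff_truncLogGrad _).contDiffAt, mixedPartial_comp_smul (zero_lt_one.trans_le hl).ne',
      Finset.sum_sub_distrib, ← Finset.mul_sum]
    ring
  simp_rw [eq_sum]
  rw [integral_const_mul, integral_finsetSum, Finset.sum_eq_zero, mul_zero]
  · exact fun i _ => integral_iteratedFDeriv_apply_eq_zero volume hN.ne' (hD i) (hDc i) _
  · exact fun i _ => (continuous_mixedPartial (hD i) _).integrable_of_hasCompactSupport
      (hasCompactSupport_iteratedFDeriv_apply (hDc i) _)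

theorem truncLogDiv_eq_zero (hN : 0 < N) (hx : 1 < ‖x‖) : truncLogDiv N x = 0 := by
  obtain ⟨c, hc⟩ := exists_eq_mul_inv_norm_pow zero_le_one truncLogDiv_comp_isometry
    fun l x hl hx hlx => pow_mul_truncLogDiv_smul hN hl hx hlx
  have flux : c * (omegaSphere N * Real.log 2) = 0 := by
    rw [← integral_pow_mul_comp_smul_sub_euclideanSpace hN continuous_truncLogDiv one_le_two hc,
      integral_pow_mul_truncLogDiv_smul_sub hN one_le_two]
  have hc₀ : c = 0 := (mul_eq_zero.1 flux).resolve_right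
    (mul_pos (omegaSphere_pos hN) (Real.log_pos one_lt_two)).ne'
  rw [hc x hx, hc₀, zero_mul]

theorem hasCompactSupport_truncLogDiv (hN : 0 < N) : HasCompactSupport (truncLogDiv N) :=
  .intro (isCompact_closedBall 0 1) fun x hx => truncLogDiv_eq_zero hN (by simpa using hx)

end TruncatedField

section TruncatedLog

variable {N : ℕ} {x : EuclideanSpace ℝ (Fin N)}

/-- The function `log |x|` with its singularity at the origin cut off: its dilated differences are
the test functions that determine the constant in the representation formula. -/
def truncLog (N : ℕ) (x : EuclideanSpace ℝ (Fin N)) : ℝ := originCutoff x * logNorm N x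

theorem contDiff_truncLog {n : ℕ∞} : ContDiff ℝ n (truncLog N) :=
  contDiff_originCutoff_mul fun _ hx => contDiffAt_logNorm hx

theorem truncLog_of_one_le_norm (hx : 1 ≤ ‖x‖) : truncLog N x = logNorm N x := by
  rw [truncLog, originCutoff_of_one_le_norm hx, one_mul]

theorem truncLog_eventuallyEq_logNorm (hx : 1 < ‖x‖) : truncLog N =ᶠ[𝓝 x] logNorm N := by
  filter_upwards [continuous_norm.continuousAt.eventually_const_lt hx] with y hy
    using truncLog_of_one_le_norm hy.le

theorem truncLog_eventuallyEq_zero : truncLog N =ᶠ[𝓝 0] fun _ => 0 := by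
  filter_upwards [originCutoff_eventuallyEq_zero] with x hx
  rw [truncLog, hx, Pi.zero_apply, zero_mul]

theorem continuous_logPairing_truncLog (hN : 0 < N) : Continuous (logPairing N (truncLog N)) := by
  refine (contDiff_of_eventuallyEq_zero (a := 0) (n := (0 : ℕ∞)) ?_ fun x hx =>
    contDiffAt_logPairing (contDiff_truncLog (n := N)).contDiffAt (by simp) hx).continuous
  filter_upwards [truncLog_eventuallyEq_zero.eventuallyEq_nhds] with x hx
  simp [logPairing, mixedPartial_congr hx, mixedPartial_const hN.ne']

theorem logPairing_truncLog (hN : 0 < N) (hx : 1 < ‖x‖) :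
    logPairing N (truncLog N) x = ell N hN * (‖x‖ ^ N)⁻¹ := by
  rw [logPairing_congr (truncLog_eventuallyEq_logNorm hx),
    logPairing_logNorm hN (norm_pos_iff.1 (zero_lt_one.trans hx))]

end TruncatedLog

section Representation

variable {N : ℕ} {u : EuclideanSpace ℝ (Fin N) → ℝ}

theorem tendsto_integral_originCutoff_smul_mul_logPairing (hN : 0 < N) (hu : ContDiff ℝ N u)
    (hc : HasCompactSupport u) :
    Tendsto (fun l : ℝ => ∫ x, originCutoff (l • x) * logPairing N u x) atTop
      (𝓝 (∫ x, logPairing N u x)) := by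
  refine tendsto_integral_filter_of_dominated_convergence
    (fun x => √(ell N hN) * gradNorm N N u x) ?_ ?_
    ((integrable_gradNorm hu hc).const_mul _) (.of_forall fun x => ?_)
  · filter_upwards [eventually_gt_atTop 0] with l hl
    simp_rw [originCutoff_smul_mul_logPairing hN u hl]
    have hv : ContDiff ℝ N fun y => u (l⁻¹ • y) := hu.comp (contDiff_const_smul l⁻¹)
    exact (((continuous_originCutoff_mul_logPairing hv).comp
      (continuous_const_smul l)).const_mul _).aestronglyMeasurable
  · refine .of_forall fun l => .of_forall fun x => ?_
    rw [norm_mul]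
    exact (mul_le_of_le_one_left (norm_nonneg _) (abs_originCutoff_le_one _)).trans
      (abs_logPairing_le hN u x)
  · rcases eq_or_ne x 0 with rfl | hx
    · simp only [logPairing_apply_zero hN, mul_zero, tendsto_const_nhds]
    · simpa using (tendsto_originCutoff_smul hx).mul_const (logPairing N u x)

theorem integral_logPairing_eq_apply_zero_mul (hN : 0 < N) (hu : ContDiff ℝ N u)
    (hc : HasCompactSupport u) :
    ∫ x, logPairing N u x = u 0 * ∫ x, truncLogDiv N x := by
  obtain ⟨C, hC⟩ := hu.continuous.bounded_above_of_compact_support hc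
  have hlim := tendsto_integral_comp_inv_smul_mul (μ := volume) hu.continuous hC
    (continuous_truncLogDiv.integrable_of_hasCompactSupport (hasCompactSupport_truncLogDiv hN))
  refine tendsto_nhds_unique (tendsto_integral_originCutoff_smul_mul_logPairing hN hu hc)
    (hlim.congr' ?_)
  filter_upwards [eventually_gt_atTop 0] with l hl
  exact (integral_originCutoff_smul_mul_logPairing hN hu hc hl).symm

theorem integral_truncLogDiv (hN : 0 < N) :
    ∫ x, truncLogDiv N x = -(ell N hN * omegaSphere N) := by
  let w (x : EuclideanSpace ℝ (Fin N)) : ℝ :=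
    truncLog N ((2 : ℝ) • x) - truncLog N x + -Real.log 2
  have hlog : ContDiff ℝ N (truncLog N) := contDiff_truncLog
  have hdil : ContDiff ℝ N fun x => truncLog N ((2 : ℝ) • x) :=
    hlog.comp (contDiff_const_smul 2)
  have hw : ContDiff ℝ N w := (hdil.sub hlog).add contDiff_const
  have hwc : HasCompactSupport w := by
    refine .intro (isCompact_closedBall 0 1) fun x hx => ?_
    have hx : 1 < ‖x‖ := by simpa using hx
    have h2x : 1 ≤ ‖(2 : ℝ) • x‖ := by
      rw [norm_smul_of_nonneg zero_le_two]
      linarith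
    simp only [w, truncLog_of_one_le_norm hx.le, truncLog_of_one_le_norm h2x,
      logNorm_smul two_ne_zero (norm_pos_iff.1 (zero_lt_one.trans hx))]
    ring
  have hw₀ : w 0 = -Real.log 2 := by simp [w]
  have pairing_w (x : EuclideanSpace ℝ (Fin N)) : logPairing N w x =
      2 ^ N * logPairing N (truncLog N) ((2 : ℝ) • x) - logPairing N (truncLog N) x := by
    rw [logPairing_add_const hN (hdil.sub hlog).contDiffAt,
      logPairing_sub hdil.contDiffAt hlog.contDiffAt, logPairing_comp_smul hN _ two_pos]
  have representation := integral_logPairing_eq_apply_zero_mul hN hw hwc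
  simp_rw [pairing_w] at representation
  rw [integral_pow_mul_comp_smul_sub_euclideanSpace hN (continuous_logPairing_truncLog hN)
    one_le_two fun x => logPairing_truncLog hN, hw₀] at representation
  refine mul_left_cancel₀ (neg_ne_zero.2 (Real.log_pos one_lt_two).ne')
    (representation.symm.trans ?_)
  ring

theorem integral_logPairing (hN : 0 < N) (hu : ContDiff ℝ N u) (hc : HasCompactSupport u) :
    ∫ x, logPairing N u x = -(ell N hN * omegaSphere N) * u 0 := by
  rw [integral_logPairing_eq_apply_zero_mul hN hu hc, integral_truncLogDiv hN, mul_comm]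

end Representation

section SupremumBound

variable {N : ℕ}

theorem ell_pos (hN : 0 < N) : 0 < ell N hN := by
  let j : Fin N := ⟨0, hN⟩
  let e : EuclideanSpace ℝ (Fin N) := EuclideanSpace.single j 1
  have he : ‖e‖ = 1 := by simp [e]
  have norm_two : ‖(2 : ℝ) • e‖ = 2 := by simp [norm_smul, he]
  have along_axis : (fun s : ℝ => truncLog N (s • e)) =ᶠ[𝓝 2] Real.log := by
    filter_upwards [lt_mem_nhds one_lt_two] with s hs
    have : ‖s • e‖ = s := by
      rw [norm_smul_of_nonneg (by linarith), he, mul_one]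
    rw [truncLog_of_one_le_norm (by linarith), logNorm, this]
  have axis_ne_zero : mixedPartial N N (logNorm N) (fun _ => j) ((2 : ℝ) • e) ≠ 0 := by
    rw [← mixedPartial_congr (truncLog_eventuallyEq_logNorm (by linarith)), mixedPartial,
      ← iteratedDeriv_comp_smul_const contDiff_truncLog, along_axis.iteratedDeriv_eq]
    exact iteratedDeriv_log_ne_zero hN.ne' two_ne_zero
  rw [← sum_normalizedLogGrad_sq hN (x := (2 : ℝ) • e) (norm_pos_iff.1 (by linarith))]
  refine Finset.sum_pos' (fun i _ => sq_nonneg _) ⟨fun _ => j, Finset.mem_univ _, ?_⟩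
  rw [normalizedLogGrad, norm_two]
  positivity

variable {u : EuclideanSpace ℝ (Fin N) → ℝ}

theorem abs_apply_zero_le (hN : 0 < N) (hu : ContDiff ℝ N u) (hc : HasCompactSupport u) :
    |u 0| ≤ (√(ell N hN) * omegaSphere N)⁻¹ * ∫ y, gradNorm N N u y := by
  have hl : 0 < √(ell N hN) := Real.sqrt_pos.2 (ell_pos hN)
  have hω : 0 < omegaSphere N := omegaSphere_pos hN
  have cauchy_schwarz : √(ell N hN) * (√(ell N hN) * omegaSphere N * |u 0|) ≤
      √(ell N hN) * ∫ y, gradNorm N N u y :=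
    calc √(ell N hN) * (√(ell N hN) * omegaSphere N * |u 0|)
        = |∫ y, logPairing N u y| := by
          rw [integral_logPairing hN hu hc, abs_mul, abs_neg,
            abs_of_pos (mul_pos (ell_pos hN) hω), ← mul_assoc, ← mul_assoc,
            Real.mul_self_sqrt (ell_pos hN).le]
      _ ≤ ∫ y, √(ell N hN) * gradNorm N N u y :=
          norm_integral_le_of_norm_le (f := logPairing N u)
            ((integrable_gradNorm hu hc).const_mul _)
            (.of_forall (abs_logPairing_le hN u))
      _ = √(ell N hN) * ∫ y, gradNorm N N u y := integral_const_mul _ _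
  rw [inv_mul_eq_div, le_div_iff₀' (mul_pos hl hω)]
  exact le_of_mul_le_mul_left cauchy_schwarz hl

theorem statement7_general (hN : 0 < N) (hu : ContDiff ℝ N u) (hc : HasCompactSupport u)
    (x : EuclideanSpace ℝ (Fin N)) :
    |u x| ≤ (√(ell N hN) * omegaSphere N)⁻¹ * ∫ y, gradNorm N N u y := by
  have translated := abs_apply_zero_le hN (hu.comp (contDiff_id.add contDiff_const))
    (hc.comp_homeomorph (Homeomorph.addRight x))
  simpa [Function.comp_def, gradNorm_comp_add_right,
    integral_add_right_eq_self (gradNorm N N u) x] using translated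

end SupremumBound

/-- the Sobolev embedding inequality
`‖u‖_∞ ≤ (√(ℓ_N) ω_{N-1})⁻¹ ∫ |∇^N u|` for smooth compactly supported `u`. -/
theorem statement7 (N : ℕ) (hN : 1 ≤ N)
    (u : EuclideanSpace ℝ (Fin N) → ℝ)
    (hu : ContDiff ℝ (⊤ : ℕ∞) u) (hsupp : HasCompactSupport u)
    (x : EuclideanSpace ℝ (Fin N)) :
    |u x| ≤ (Real.sqrt (ell N (by omega)) * omegaSphere N)⁻¹ * ∫ y, gradNorm N N u y :=
  statement7_general hN (hu.of_le (by exact_mod_cast le_top)) hsupp x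
end
end

section
/- Let N ≥ 1. The constant (√(ℓ_N) ω_{N−1})^{−1} in the inequality ‖u‖_∞ ≤ C ∫_{ℝ^N} |∇^N u| is optimal: for every ε > 0 there exists a nonzero u ∈ C_c^∞(ℝ^N) with ∫_{ℝ^N} |∇^N u(x)| dx < (√(ℓ_N) · ω_{N−1} + ε) · ‖u‖_∞. Equivalently, the infimum of ∫_{ℝ^N} |∇^N u| / ‖u‖_∞ over nonzero u ∈ C_c^∞(ℝ^N) equals √(ℓ_N) ω_{N−1}. -/
open MeasureTheory Metric Filter Matrix

noncomputable section

/-!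
Take `u = S (-δ log |x|)` with `S` a smooth transition from `0` to `1`. In the chain rule for
`∇^N u` the only term of first order in `δ` is `-δ S'(-δ log |x|) ∇^N log |x|`; all others carry
at least two derivatives of `S`, hence a factor `δ²`, and are bounded by a multiple of `|x|^(-N)`
times derivatives of `S` at `-δ log |x|`. Since `log |x|` is rotation invariant and changes by a
constant under dilations, `|∇^N log |x||` is exactly `√ℓ_N |x|^(-N)`. In polar coordinates with
`t = -δ log r`, the measure `|x|^(-N) dx` becomes `ω_{N-1} δ⁻¹ dt`, so
`∫ |∇^N u| ≤ ω_{N-1} (√ℓ_N ∫ S' + O(δ)) = √ℓ_N ω_{N-1} + O(δ)`, while `‖u‖_∞ = 1`.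
-/

open Module
open scoped ContDiff Topology

section InvariantSeminorm

variable {E : Type*} [NormedAddCommGroup E]

/-- A seminorm on `m`-linear forms is isometry invariant if precomposing every argument of a form
with the same linear isometry does not change its value. The operator norm and the Frobenius norm
are the examples of interest. -/
def IsIsometryInvariant [NormedSpace ℝ E] {m : ℕ} (p : Seminorm ℝ (E [×m]→L[ℝ] ℝ)) : Prop :=
  ∀ (L : E ≃ₗᵢ[ℝ] E) (T : E [×m]→L[ℝ] ℝ),
    p (T.compContinuousLinearMap fun _ => (L.toContinuousLinearEquiv : E →L[ℝ] E)) = p T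

theorem isIsometryInvariant_normSeminorm [NormedSpace ℝ E] (m : ℕ) :
    IsIsometryInvariant (normSeminorm ℝ (E [×m]→L[ℝ] ℝ)) :=
  fun L T => T.norm_compContinuous_linearIsometryEquiv fun _ => L

theorem exists_seminorm_le_mul_norm [NormedSpace ℝ E] [FiniteDimensional ℝ E] {m : ℕ}
    (p : Seminorm ℝ (E [×m]→L[ℝ] ℝ)) : ∃ C, 0 < C ∧ ∀ T, p T ≤ C * ‖T‖ := by
  have : FiniteDimensional ℝ (E [×m]→L[ℝ] ℝ) :=
    .of_injective ContinuousMultilinearMap.toMultilinearMapLinear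
      ContinuousMultilinearMap.toMultilinearMap_injective
  exact p.bound_of_continuous_normedSpace p.convexOn.locallyLipschitz.continuous

theorem sum_apply_comp_sq_succ [NormedSpace ℝ E] {ι : Type*} [Fintype ι] {m : ℕ}
    (T : E [×m + 1]→L[ℝ] ℝ) (b : ι → E) :
    ∑ i : Fin (m + 1) → ι, T (b ∘ i) ^ 2 =
      ∑ k, ∑ i : Fin m → ι, T.curryLeft (b k) (b ∘ i) ^ 2 := by
  rw [← Fintype.sum_prod_type', ← (Fin.consEquiv fun _ => ι).sum_comp]
  simp [Fin.consEquiv, Fin.comp_cons]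

variable [InnerProductSpace ℝ E]

/-- Replace the basis one argument at a time; each replacement is Parseval's identity. -/
theorem sum_apply_orthonormalBasis_sq_eq {ι ι' : Type*} [Fintype ι] [Fintype ι'] {m : ℕ}
    (T : E [×m]→L[ℝ] ℝ) (b : OrthonormalBasis ι ℝ E) (b' : OrthonormalBasis ι' ℝ E) :
    ∑ i : Fin m → ι, T (b ∘ i) ^ 2 = ∑ i : Fin m → ι', T (b' ∘ i) ^ 2 := by
  induction m with
  | zero => simp [Subsingleton.elim (_ ∘ _) (0 : Fin 0 → E)]
  | succ m ih =>
    have parseval (v : Fin m → E) :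
        ∑ k, T.curryLeft (b k) v ^ 2 = ∑ k, T.curryLeft (b' k) v ^ 2 := by
      let ψ : StrongDual ℝ E := (ContinuousMultilinearMap.apply ℝ _ ℝ v).comp T.curryLeft
      exact (b.norm_dual ψ).symm.trans (b'.norm_dual ψ)
    simp_rw [sum_apply_comp_sq_succ, ih]
    rw [Finset.sum_comm, Finset.sum_congr rfl fun i _ => parseval (b' ∘ i), Finset.sum_comm]

variable [FiniteDimensional ℝ E]

/-- The Frobenius norm of an `m`-linear form: the Euclidean norm of its array of coefficients in
an orthonormal basis, the choice of which is immaterial by `frobeniusSeminorm_apply`. -/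
def frobeniusSeminorm (E : Type*) [NormedAddCommGroup E] [InnerProductSpace ℝ E]
    [FiniteDimensional ℝ E] (m : ℕ) : Seminorm ℝ (E [×m]→L[ℝ] ℝ) :=
  let coefficients : (E [×m]→L[ℝ] ℝ) →ₗ[ℝ] EuclideanSpace ℝ (Fin m → Fin (finrank ℝ E)) :=
    { toFun := fun T => WithLp.toLp 2 fun i => T (stdOrthonormalBasis ℝ E ∘ i)
      map_add' := fun _ _ => rfl
      map_smul' := fun _ _ => rfl }
  (normSeminorm ℝ _).comp coefficients

theorem frobeniusSeminorm_apply {ι : Type*} [Fintype ι] {m : ℕ} (b : OrthonormalBasis ι ℝ E)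
    (T : E [×m]→L[ℝ] ℝ) : frobeniusSeminorm E m T = √(∑ i : Fin m → ι, T (b ∘ i) ^ 2) := by
  rw [sum_apply_orthonormalBasis_sq_eq T b (stdOrthonormalBasis ℝ E)]
  calc frobeniusSeminorm E m T
      = ‖WithLp.toLp 2 fun i : Fin m → _ => T (stdOrthonormalBasis ℝ E ∘ i)‖ := rfl
    _ = _ := by simp [EuclideanSpace.norm_eq]

theorem isIsometryInvariant_frobeniusSeminorm (m : ℕ) :
    IsIsometryInvariant (frobeniusSeminorm E m) := by
  intro L T
  let b := stdOrthonormalBasis ℝ E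
  rw [frobeniusSeminorm_apply b, frobeniusSeminorm_apply (b.map L)]
  rfl

end InvariantSeminorm

theorem gradNorm_eq_frobeniusSeminorm (N m : ℕ) (u : EuclideanSpace ℝ (Fin N) → ℝ)
    (x : EuclideanSpace ℝ (Fin N)) :
    gradNorm N m u x = frobeniusSeminorm _ m (iteratedFDeriv ℝ m u x) := by
  rw [frobeniusSeminorm_apply (EuclideanSpace.basisFun (Fin N) ℝ)]
  simp only [gradNorm, mixedPartial, Function.comp_def, EuclideanSpace.basisFun_apply]

section LogNorm

theorem iteratedFDeriv_comp_continuousLinearEquiv {𝕜 E F G : Type*} [NontriviallyNormedField 𝕜]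
    [NormedAddCommGroup E] [NormedSpace 𝕜 E] [NormedAddCommGroup F] [NormedSpace 𝕜 F]
    [NormedAddCommGroup G] [NormedSpace 𝕜 G] (g : G ≃L[𝕜] E) (f : E → F) (m : ℕ) (x : G) :
    iteratedFDeriv 𝕜 m (f ∘ g) x =
      (iteratedFDeriv 𝕜 m f (g x)).compContinuousLinearMap fun _ => (g : G →L[𝕜] E) := by
  simpa only [Set.preimage_univ, iteratedFDerivWithin_univ] using
    g.iteratedFDerivWithin_comp_right f uniqueDiffOn_univ (Set.mem_univ (g x)) m

variable {E : Type*} [NormedAddCommGroup E]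

theorem iteratedFDeriv_log_norm_isometry [NormedSpace ℝ E] (L : E ≃ₗᵢ[ℝ] E) (m : ℕ) (x : E) :
    (iteratedFDeriv ℝ m (fun y : E => Real.log ‖y‖) (L x)).compContinuousLinearMap
        (fun _ => (L.toContinuousLinearEquiv : E →L[ℝ] E)) =
      iteratedFDeriv ℝ m (fun y : E => Real.log ‖y‖) x := by
  rw [← LinearIsometryEquiv.coe_toContinuousLinearEquiv,
    ← iteratedFDeriv_comp_continuousLinearEquiv]
  simp [Function.comp_def]

variable [InnerProductSpace ℝ E]

theorem contDiffAt_log_norm {k : ℕ∞ω} {x : E} (hx : x ≠ 0) :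
    ContDiffAt ℝ k (fun y : E => Real.log ‖y‖) x :=
  (contDiffAt_norm ℝ hx).log (norm_ne_zero_iff.2 hx)

theorem iteratedFDeriv_log_norm_smul {m : ℕ} (hm : m ≠ 0) {ρ : ℝ} (hρ : ρ ≠ 0) {x : E}
    (hx : x ≠ 0) :
    iteratedFDeriv ℝ m (fun y : E => Real.log ‖y‖) (ρ • x) =
      (ρ ^ m)⁻¹ • iteratedFDeriv ℝ m (fun y : E => Real.log ‖y‖) x := by
  let homothety : E ≃L[ℝ] E := .smulLeft (Units.mk0 ρ hρ)
  have homothety_apply (y : E) : homothety y = ρ • y := rfl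
  have log_norm_homothety : (fun y : E => Real.log ‖y‖) ∘ homothety =ᶠ[𝓝 x]
      (fun _ => Real.log |ρ|) + fun y : E => Real.log ‖y‖ := by
    filter_upwards [isOpen_ne.mem_nhds hx] with y hy
    rw [Function.comp_apply, Pi.add_apply, homothety_apply, norm_smul, Real.norm_eq_abs,
      Real.log_mul (abs_ne_zero.2 hρ) (norm_ne_zero_iff.2 hy)]
  have homothety_deriv := (log_norm_homothety.iteratedFDeriv ℝ m).eq_of_nhds
  rw [iteratedFDeriv_comp_continuousLinearEquiv,
    iteratedFDeriv_add_apply contDiffAt_const (contDiffAt_log_norm hx),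
    iteratedFDeriv_const_of_ne hm, Pi.zero_apply, zero_add] at homothety_deriv
  rw [eq_inv_smul_iff₀ (pow_ne_zero m hρ), ← homothety_deriv]
  ext v
  simpa [homothety_apply] using
    ((iteratedFDeriv ℝ m (fun y : E => Real.log ‖y‖) (ρ • x)).map_smul_univ (fun _ => ρ) v).symm

theorem exists_linearIsometryEquiv_eq_norm_smul {e : E} (he : ‖e‖ = 1) {x : E} (hx : x ≠ 0) :
    ∃ L : E ≃ₗᵢ[ℝ] E, x = ‖x‖ • L e := by
  have norm_eq : ‖e‖ = ‖‖x‖⁻¹ • x‖ := by simp [he, norm_smul, hx]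
  refine ⟨Submodule.reflection (ℝ ∙ (e - ‖x‖⁻¹ • x))ᗮ, ?_⟩
  rw [Submodule.reflection_sub norm_eq, smul_inv_smul₀ (norm_ne_zero_iff.2 hx)]

theorem IsIsometryInvariant.apply_iteratedFDeriv_log_norm {m : ℕ}
    {p : Seminorm ℝ (E [×m]→L[ℝ] ℝ)} (hp : IsIsometryInvariant p) (hm : m ≠ 0) {e : E}
    (he : ‖e‖ = 1) {x : E} (hx : x ≠ 0) :
    p (iteratedFDeriv ℝ m (fun y : E => Real.log ‖y‖) x) =
      p (iteratedFDeriv ℝ m (fun y : E => Real.log ‖y‖) e) / ‖x‖ ^ m := by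
  obtain ⟨L, hL⟩ := exists_linearIsometryEquiv_eq_norm_smul he hx
  have hLe : L e ≠ 0 := by simp [← norm_ne_zero_iff, he]
  calc p (iteratedFDeriv ℝ m (fun y : E => Real.log ‖y‖) x)
      = p ((‖x‖ ^ m)⁻¹ • iteratedFDeriv ℝ m (fun y : E => Real.log ‖y‖) (L e)) := by
        rw [← iteratedFDeriv_log_norm_smul hm (norm_ne_zero_iff.2 hx) hLe, ← hL]
    _ = p (iteratedFDeriv ℝ m (fun y : E => Real.log ‖y‖) e) / ‖x‖ ^ m := by
        rw [map_smul_eq_mul, ← hp L (iteratedFDeriv ℝ m _ (L e)),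
          iteratedFDeriv_log_norm_isometry, norm_inv, norm_pow, norm_norm, inv_mul_eq_div]

theorem exists_norm_iteratedFDeriv_log_norm_le {e : E} (he : ‖e‖ = 1) (m : ℕ) :
    ∃ M : ℝ, 0 ≤ M ∧ ∀ x : E, x ≠ 0 → ∀ i, 1 ≤ i → i ≤ m →
      ‖iteratedFDeriv ℝ i (fun y : E => Real.log ‖y‖) x‖ ≤ (M / ‖x‖) ^ i := by
  let c (i : ℕ) : ℝ := ‖iteratedFDeriv ℝ i (fun y : E => Real.log ‖y‖) e‖
  have hc (i : ℕ) (_ : i ∈ Finset.range (m + 1)) : 0 ≤ c i := norm_nonneg _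
  have one_le : 1 ≤ 1 + ∑ i ∈ Finset.range (m + 1), c i :=
    le_add_of_nonneg_right (Finset.sum_nonneg hc)
  refine ⟨1 + ∑ i ∈ Finset.range (m + 1), c i, zero_le_one.trans one_le, fun x hx i hi him => ?_⟩
  have c_le : c i ≤ 1 + ∑ i ∈ Finset.range (m + 1), c i :=
    (Finset.single_le_sum hc (Finset.mem_range.2 (by lia))).trans
      (le_add_of_nonneg_left zero_le_one)
  calc ‖iteratedFDeriv ℝ i (fun y : E => Real.log ‖y‖) x‖
      = c i / ‖x‖ ^ i :=
        (isIsometryInvariant_normSeminorm i).apply_iteratedFDeriv_log_norm (by lia) he hx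
    _ ≤ (1 + ∑ i ∈ Finset.range (m + 1), c i) ^ i / ‖x‖ ^ i := by
        gcongr
        exact c_le.trans (le_self_pow₀ one_le (by lia))
    _ = _ := (div_pow _ _ _).symm

end LogNorm

section ChainRule

variable {φ : ℝ → ℝ} {n : ℕ} {K : ℝ}

theorem iteratedDeriv_sub_tangent_of_two_le {i : ℕ} (hi : 2 ≤ i) {t : ℝ}
    (hφ : ContDiffAt ℝ i φ t) :
    iteratedDeriv i (fun y => φ y - (φ t + deriv φ t * (y - t))) t = iteratedDeriv i φ t := by
  obtain ⟨j, rfl⟩ := Nat.exists_eq_add_of_le' hi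
  have tangent : iteratedDeriv (j + 2) (fun y => φ t + deriv φ t * (y - t)) t = 0 := by
    simp [iteratedDeriv_succ', iteratedDeriv_const]
  rw [iteratedDeriv_fun_sub hφ (by fun_prop), tangent, sub_zero]

theorem abs_iteratedDeriv_sub_tangent_le (hφ : ContDiff ℝ n φ) {t : ℝ} (hK : 0 ≤ K)
    (hφK : ∀ i, 2 ≤ i → i ≤ n → |iteratedDeriv i φ t| ≤ K) {i : ℕ} (hi : i ≤ n) :
    |iteratedDeriv i (fun y => φ y - (φ t + deriv φ t * (y - t))) t| ≤ K := by
  obtain rfl | rfl | two_le : i = 0 ∨ i = 1 ∨ 2 ≤ i := by lia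
  · simpa using hK
  · have hd : DifferentiableAt ℝ φ t := hφ.differentiable (by norm_cast; lia) t
    have tangent : deriv (fun y => φ t + deriv φ t * (y - t)) t = deriv φ t := by simp
    rwa [iteratedDeriv_one, deriv_fun_sub hd (by fun_prop), tangent, sub_self, abs_zero]
  · rw [iteratedDeriv_sub_tangent_of_two_le two_le (hφ.contDiffAt.of_le (by exact_mod_cast hi))]
    exact hφK i two_le hi

variable {E : Type*} [NormedAddCommGroup E] [NormedSpace ℝ E] {f : E → ℝ} {x : E}

theorem norm_iteratedFDeriv_comp_le_of_contDiffAt (hφ : ContDiff ℝ n φ) (hf : ContDiffAt ℝ n f x)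
    {D : ℝ} (hφK : ∀ i ≤ n, |iteratedDeriv i φ (f x)| ≤ K)
    (hfD : ∀ i, 1 ≤ i → i ≤ n → ‖iteratedFDeriv ℝ i f x‖ ≤ D ^ i) :
    ‖iteratedFDeriv ℝ n (φ ∘ f) x‖ ≤ n.factorial * K * D ^ n := by
  obtain ⟨U, hfU, hU, hxU⟩ := _root_.eventually_nhds_iff.1 (hf.eventually (by simp))
  rw [← iteratedFDerivWithin_of_isOpen n hU hxU]
  refine norm_iteratedFDerivWithin_comp_le hφ.contDiffOn
    (fun y hy => (hfU y hy).contDiffWithinAt) le_rfl uniqueDiffOn_univ hU.uniqueDiffOn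
    (Set.mapsTo_univ f U) hxU (fun i hi => ?_) (fun i h₁ hi => ?_)
  · rw [iteratedFDerivWithin_univ, norm_iteratedFDeriv_eq_norm_iteratedDeriv]
    exact hφK i hi
  · rw [iteratedFDerivWithin_of_isOpen i hU hxU]
    exact hfD i h₁ hi

/-- Subtracting from `φ` its tangent line at `f x` isolates the only term of the Faà di Bruno
formula that involves the first derivative of `φ`. -/
theorem norm_iteratedFDeriv_comp_sub_le (hn : n ≠ 0) (hφ : ContDiff ℝ n φ)
    (hf : ContDiffAt ℝ n f x) {D : ℝ} (hK : 0 ≤ K)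
    (hφK : ∀ i, 2 ≤ i → i ≤ n → |iteratedDeriv i φ (f x)| ≤ K)
    (hfD : ∀ i, 1 ≤ i → i ≤ n → ‖iteratedFDeriv ℝ i f x‖ ≤ D ^ i) :
    ‖iteratedFDeriv ℝ n (φ ∘ f) x - deriv φ (f x) • iteratedFDeriv ℝ n f x‖ ≤
      n.factorial * K * D ^ n := by
  let r (y : ℝ) : ℝ := φ y - (φ (f x) + deriv φ (f x) * (y - f x))
  have hr : ContDiff ℝ n r := by fun_prop
  have decomposition : φ ∘ f =
      r ∘ f + (deriv φ (f x) • f + fun _ => φ (f x) - deriv φ (f x) * f x) := by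
    ext y
    simp only [r, Function.comp_apply, Pi.add_apply, Pi.smul_apply, smul_eq_mul]
    ring
  have hlin : ContDiffAt ℝ n (deriv φ (f x) • f) x := hf.const_smul (deriv φ (f x))
  have haffine : ContDiffAt ℝ n
      (deriv φ (f x) • f + fun _ => φ (f x) - deriv φ (f x) * f x) x := hlin.add contDiffAt_const
  rw [decomposition, iteratedFDeriv_add_apply (hr.contDiffAt.comp x hf) haffine,
    iteratedFDeriv_add_apply hlin contDiffAt_const, iteratedFDeriv_const_smul_apply hf,
    iteratedFDeriv_const_of_ne hn, Pi.zero_apply, add_zero, add_sub_cancel_right]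
  exact norm_iteratedFDeriv_comp_le_of_contDiffAt hr hf
    (fun i hi => abs_iteratedDeriv_sub_tangent_le hφ hK hφK hi) hfD

end ChainRule

section LogNormProfile

variable {E : Type*} [NormedAddCommGroup E] [InnerProductSpace ℝ E]

theorem norm_iteratedFDeriv_comp_mul_log_norm_sub_le {m : ℕ} (hm : m ≠ 0) {M : ℝ} {x : E}
    (hx : x ≠ 0) (hM : ∀ i, 1 ≤ i → i ≤ m →
      ‖iteratedFDeriv ℝ i (fun y : E => Real.log ‖y‖) x‖ ≤ (M / ‖x‖) ^ i)
    {φ : ℝ → ℝ} (hφ : ContDiff ℝ m φ) {c : ℝ} (hc : |c| ≤ 1) :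
    ‖iteratedFDeriv ℝ m (fun y : E => φ (c * Real.log ‖y‖)) x -
        (c * deriv φ (c * Real.log ‖x‖)) • iteratedFDeriv ℝ m (fun y : E => Real.log ‖y‖) x‖ ≤
      m.factorial * (c ^ 2 * ∑ i ∈ Finset.Icc 2 m, |iteratedDeriv i φ (c * Real.log ‖x‖)|) *
        (M / ‖x‖) ^ m := by
  have deriv_scaled : deriv (fun t => φ (c * t)) (Real.log ‖x‖) =
      c * deriv φ (c * Real.log ‖x‖) := deriv_comp_mul_left c φ _
  rw [← deriv_scaled]
  refine norm_iteratedFDeriv_comp_sub_le (φ := fun t => φ (c * t)) hm (by fun_prop)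
    (contDiffAt_log_norm hx) (by positivity) (fun i h₂ hi => ?_) hM
  rw [iteratedDeriv_comp_const_mul (hφ.of_le (by exact_mod_cast hi)), abs_mul, abs_pow,
    ← sq_abs c]
  gcongr ?_ * ?_
  · exact pow_le_pow_of_le_one (abs_nonneg c) hc h₂
  · exact Finset.single_le_sum (f := fun i => |iteratedDeriv i φ (c * Real.log ‖x‖)|)
      (fun _ _ => abs_nonneg _) (Finset.mem_Icc.2 ⟨h₂, hi⟩)

variable [FiniteDimensional ℝ E]

theorem IsIsometryInvariant.exists_apply_iteratedFDeriv_comp_mul_log_norm_le {m : ℕ}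
    {p : Seminorm ℝ (E [×m]→L[ℝ] ℝ)} (hp : IsIsometryInvariant p) (hm : m ≠ 0) {e : E}
    (he : ‖e‖ = 1) :
    ∃ C, 0 ≤ C ∧ ∀ φ : ℝ → ℝ, ContDiff ℝ m φ → ∀ c : ℝ, |c| ≤ 1 → ∀ x : E, x ≠ 0 →
      p (iteratedFDeriv ℝ m (fun y : E => φ (c * Real.log ‖y‖)) x) ≤
        (‖x‖ ^ m)⁻¹ * (|c| *
          (p (iteratedFDeriv ℝ m (fun y : E => Real.log ‖y‖) e) * |deriv φ (c * Real.log ‖x‖)| +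
            |c| * (C * ∑ i ∈ Finset.Icc 2 m, |iteratedDeriv i φ (c * Real.log ‖x‖)|))) := by
  obtain ⟨B, hB, hpB⟩ := exists_seminorm_le_mul_norm p
  obtain ⟨M, hM, hlogM⟩ := exists_norm_iteratedFDeriv_log_norm_le he m
  refine ⟨B * m.factorial * M ^ m, by positivity, fun φ hφ c hc x hx => ?_⟩
  set ℓ := p (iteratedFDeriv ℝ m (fun y : E => Real.log ‖y‖) e)
  set S := ∑ i ∈ Finset.Icc 2 m, |iteratedDeriv i φ (c * Real.log ‖x‖)|
  set T := iteratedFDeriv ℝ m (fun y : E => φ (c * Real.log ‖y‖)) x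
  set T₀ := (c * deriv φ (c * Real.log ‖x‖)) • iteratedFDeriv ℝ m (fun y : E => Real.log ‖y‖) x
    with hT₀
  have main_term : p T₀ = |c| * |deriv φ (c * Real.log ‖x‖)| * (ℓ / ‖x‖ ^ m) := by
    rw [hT₀, map_smul_eq_mul, hp.apply_iteratedFDeriv_log_norm hm he hx, Real.norm_eq_abs, abs_mul]
  have remainder : p (T - T₀) ≤ B * (m.factorial * (c ^ 2 * S) * (M / ‖x‖) ^ m) :=
    (hpB _).trans (by
      gcongr
      exact norm_iteratedFDeriv_comp_mul_log_norm_sub_le hm hx (hlogM x hx) hφ hc)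
  calc p T = p (T₀ + (T - T₀)) := by rw [add_sub_cancel]
    _ ≤ p T₀ + p (T - T₀) := map_add_le_add p _ _
    _ ≤ |c| * |deriv φ (c * Real.log ‖x‖)| * (ℓ / ‖x‖ ^ m) +
        B * (m.factorial * (c ^ 2 * S) * (M / ‖x‖) ^ m) := by rw [main_term]; gcongr
    _ = _ := by
      rw [← sq_abs c]
      ring

end LogNormProfile

section LogPolarCoordinates

theorem pow_pred_smul_inv_pow_smul {G₀ X : Type*} [GroupWithZero G₀] [MulAction G₀ X] {d : ℕ}
    (hd : d ≠ 0) {r : G₀} (hr : r ≠ 0) (v : X) : r ^ (d - 1) • (r ^ d)⁻¹ • v = r⁻¹ • v := by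
  obtain ⟨k, rfl⟩ := Nat.exists_eq_succ_of_ne_zero hd
  rw [smul_smul, Nat.succ_eq_add_one, Nat.add_sub_cancel, pow_succ', _root_.mul_inv_rev,
    mul_inv_cancel_left₀ (pow_ne_zero k hr)]

variable {F : Type*} [NormedAddCommGroup F] [NormedSpace ℝ F]

theorem integral_Ioi_inv_smul_comp_log (g : ℝ → F) :
    ∫ r in Set.Ioi (0 : ℝ), r⁻¹ • g (Real.log r) = ∫ t, g t := by
  rw [← Real.range_exp, ← Set.image_univ,
    integral_image_eq_integral_abs_deriv_smul MeasurableSet.univ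
      (fun t _ => (Real.hasDerivAt_exp t).hasDerivWithinAt) Real.exp_injective.injOn]
  simp [smul_smul]

theorem integrableOn_Ioi_inv_smul_comp_log {g : ℝ → F} :
    IntegrableOn (fun r => r⁻¹ • g (Real.log r)) (Set.Ioi 0) ↔ Integrable g := by
  rw [← Real.range_exp, ← Set.image_univ,
    integrableOn_image_iff_integrableOn_abs_deriv_smul MeasurableSet.univ
      (fun t _ => (Real.hasDerivAt_exp t).hasDerivWithinAt) Real.exp_injective.injOn]
  simp [smul_smul]

variable {E : Type*} [NormedAddCommGroup E] [NormedSpace ℝ E] [FiniteDimensional ℝ E]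
  [Nontrivial E] [MeasurableSpace E] [BorelSpace E] (μ : Measure E) [μ.IsAddHaarMeasure]

theorem integral_inv_norm_pow_smul_comp_log_norm (g : ℝ → F) :
    ∫ x, (‖x‖ ^ finrank ℝ E)⁻¹ • g (Real.log ‖x‖) ∂μ =
      (finrank ℝ E * μ.real (ball 0 1)) • ∫ t, g t := by
  rw [integral_fun_norm_addHaar μ fun r => (r ^ finrank ℝ E)⁻¹ • g (Real.log r),
    setIntegral_congr_fun measurableSet_Ioi fun r (hr : 0 < r) =>
      pow_pred_smul_inv_pow_smul finrank_pos.ne' hr.ne' (g (Real.log r)),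
    integral_Ioi_inv_smul_comp_log, ← Nat.cast_smul_eq_nsmul ℝ, smul_smul]

theorem integrable_inv_norm_pow_smul_comp_log_norm {g : ℝ → F} :
    Integrable (fun x : E => (‖x‖ ^ finrank ℝ E)⁻¹ • g (Real.log ‖x‖)) μ ↔ Integrable g := by
  rw [integrable_fun_norm_addHaar μ (f := fun r => (r ^ finrank ℝ E)⁻¹ • g (Real.log r)),
    integrableOn_congr_fun (s := Set.Ioi 0) (fun r (hr : 0 < r) =>
      pow_pred_smul_inv_pow_smul finrank_pos.ne' hr.ne' (g (Real.log r))) measurableSet_Ioi,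
    integrableOn_Ioi_inv_smul_comp_log]

end LogPolarCoordinates

section SmoothTransition

theorem hasCompactSupport_deriv_smoothTransition :
    HasCompactSupport (deriv Real.smoothTransition) := by
  refine .intro (isCompact_Icc (a := (0 : ℝ)) (b := 1)) fun t ht => ?_
  rcases not_and_or.1 ht with neg | gt
  · have locally_zero : Real.smoothTransition =ᶠ[𝓝 t] fun _ => 0 := by
      filter_upwards [Iio_mem_nhds (not_le.1 neg)] with s hs
      exact Real.smoothTransition.zero_of_nonpos hs.le
    rw [locally_zero.deriv_eq, deriv_const]
  · have locally_one : Real.smoothTransition =ᶠ[𝓝 t] fun _ => 1 := by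
      filter_upwards [Ioi_mem_nhds (not_le.1 gt)] with s hs
      exact Real.smoothTransition.one_of_one_le hs.le
    rw [locally_one.deriv_eq, deriv_const]

theorem hasCompactSupport_iteratedDeriv_smoothTransition {i : ℕ} (hi : 1 ≤ i) :
    HasCompactSupport (iteratedDeriv i Real.smoothTransition) := by
  induction i, hi using Nat.le_induction with
  | base => simpa only [iteratedDeriv_one] using hasCompactSupport_deriv_smoothTransition
  | succ i _ ih => simpa only [iteratedDeriv_succ] using ih.deriv

theorem integrable_iteratedDeriv_smoothTransition {i : ℕ} (hi : 1 ≤ i) :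
    Integrable (iteratedDeriv i Real.smoothTransition) :=
  ((Real.smoothTransition.contDiff (n := i)).continuous_iteratedDeriv i
    le_rfl).integrable_of_hasCompactSupport (hasCompactSupport_iteratedDeriv_smoothTransition hi)

theorem integral_abs_deriv_smoothTransition : ∫ t, |deriv Real.smoothTransition t| = 1 := by
  have differentiable : Differentiable ℝ Real.smoothTransition :=
    (Real.smoothTransition.contDiff (n := 1)).differentiable one_ne_zero
  have integrable : Integrable (deriv Real.smoothTransition) := by
    simpa only [iteratedDeriv_one] using integrable_iteratedDeriv_smoothTransition le_rfl
  have tendsto_zero : Tendsto Real.smoothTransition atBot (𝓝 0) :=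
    tendsto_const_nhds.congr' <| by
      filter_upwards [eventually_le_atBot 0] with t ht
      exact (Real.smoothTransition.zero_of_nonpos ht).symm
  have tendsto_one : Tendsto Real.smoothTransition atTop (𝓝 1) :=
    tendsto_const_nhds.congr' <| by
      filter_upwards [eventually_ge_atTop 1] with t ht
      exact (Real.smoothTransition.one_of_one_le ht).symm
  simp_rw [abs_of_nonneg Real.smoothTransition.monotone.deriv_nonneg]
  simpa using integral_of_hasDerivAt_of_tendsto (fun t => (differentiable t).hasDerivAt) integrable
    tendsto_zero tendsto_one

end SmoothTransition

section LogCutoff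

variable {E : Type*} [NormedAddCommGroup E] {δ : ℝ} {x : E}

open Classical in
/-- The logarithmic cutoff `S (-δ log ‖x‖)`, where `S` is the smooth transition from `0` on
`(-∞, 0]` to `1` on `[1, ∞)`: it decreases from `1` to `0` over the annulus
`exp (-1 / δ) ≤ ‖x‖ ≤ 1`. The value at the origin is prescribed separately because
`Real.log 0 = 0`. -/
def logCutoff (δ : ℝ) (x : E) : ℝ :=
  if x = 0 then 1 else Real.smoothTransition (-δ * Real.log ‖x‖)

theorem logCutoff_zero (δ : ℝ) : logCutoff δ (0 : E) = 1 := if_pos rfl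

theorem logCutoff_eventuallyEq (δ : ℝ) (hx : x ≠ 0) :
    logCutoff δ =ᶠ[𝓝 x] fun y => Real.smoothTransition (-δ * Real.log ‖y‖) := by
  filter_upwards [isOpen_ne.mem_nhds hx] with y hy
  exact if_neg hy

theorem abs_logCutoff_le_one (δ : ℝ) (x : E) : |logCutoff δ x| ≤ 1 := by
  rw [logCutoff]
  split_ifs
  · exact abs_one.le
  · rw [abs_of_nonneg (Real.smoothTransition.nonneg _)]
    exact Real.smoothTransition.le_one _

theorem one_le_iSup_abs_logCutoff (E : Type*) [NormedAddCommGroup E] (δ : ℝ) :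
    1 ≤ ⨆ x : E, |logCutoff δ x| := by
  have bddAbove : BddAbove (Set.range fun x : E => |logCutoff δ x|) :=
    ⟨1, Set.forall_mem_range.2 (abs_logCutoff_le_one δ)⟩
  simpa [logCutoff_zero] using le_ciSup bddAbove 0

theorem logCutoff_eq_one (hδ : 0 < δ) (hx : ‖x‖ < Real.exp (-1 / δ)) : logCutoff δ x = 1 := by
  rcases eq_or_ne x 0 with rfl | hx₀
  · exact logCutoff_zero δ
  · have log_lt : Real.log ‖x‖ < -1 / δ := (Real.log_lt_iff_lt_exp (norm_pos_iff.2 hx₀)).2 hx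
    rw [lt_div_iff₀ hδ] at log_lt
    rw [logCutoff, if_neg hx₀, Real.smoothTransition.one_of_one_le (by linarith)]

theorem logCutoff_eq_zero (hδ : 0 ≤ δ) (hx : 1 < ‖x‖) : logCutoff δ x = 0 := by
  have hx₀ : x ≠ 0 := norm_pos_iff.1 (zero_lt_one.trans hx)
  rw [logCutoff, if_neg hx₀, Real.smoothTransition.zero_of_nonpos]
  exact mul_nonpos_of_nonpos_of_nonneg (neg_nonpos.2 hδ) (Real.log_pos hx).le

theorem hasCompactSupport_logCutoff [ProperSpace E] (hδ : 0 ≤ δ) :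
    HasCompactSupport (logCutoff δ : E → ℝ) :=
  .intro (isCompact_closedBall 0 1) fun _ hx => logCutoff_eq_zero hδ (by simpa using hx)

theorem contDiff_logCutoff [InnerProductSpace ℝ E] {k : ℕ∞} (hδ : 0 < δ) :
    ContDiff ℝ k (logCutoff δ : E → ℝ) := by
  refine contDiff_iff_contDiffAt.2 fun x => ?_
  rcases eq_or_ne x 0 with rfl | hx
  · have locally_one : (logCutoff δ : E → ℝ) =ᶠ[𝓝 0] fun _ => 1 := by
      filter_upwards [ball_mem_nhds 0 (Real.exp_pos (-1 / δ))] with y hy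
      exact logCutoff_eq_one hδ (mem_ball_zero_iff.1 hy)
    exact contDiffAt_const.congr_of_eventuallyEq locally_one
  · exact (Real.smoothTransition.contDiffAt.comp x
      (contDiffAt_const.mul (contDiffAt_log_norm hx))).congr_of_eventuallyEq
        (logCutoff_eventuallyEq δ hx)

end LogCutoff

section Optimality

variable {E : Type*} [NormedAddCommGroup E] [InnerProductSpace ℝ E] [FiniteDimensional ℝ E]
  [MeasurableSpace E] [BorelSpace E] (μ : Measure E) [μ.IsAddHaarMeasure]
  {n : ℕ} {p : Seminorm ℝ (E [×n]→L[ℝ] ℝ)} {e : E}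

theorem IsIsometryInvariant.exists_integral_apply_iteratedFDeriv_comp_mul_log_norm_le
    (hp : IsIsometryInvariant p) (hn : finrank ℝ E = n) (he : ‖e‖ = 1) {φ : ℝ → ℝ}
    (hφ : ContDiff ℝ n φ) (hφi : ∀ i, 1 ≤ i → i ≤ n → Integrable (iteratedDeriv i φ)) :
    ∃ A, 0 ≤ A ∧ ∀ c : ℝ, c ≠ 0 → |c| ≤ 1 →
      ∫ x, p (iteratedFDeriv ℝ n (fun y : E => φ (c * Real.log ‖y‖)) x) ∂μ ≤
        n * μ.real (ball 0 1) *
          (p (iteratedFDeriv ℝ n (fun y : E => Real.log ‖y‖) e) * (∫ t, |deriv φ t|) +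
            |c| * A) := by
  have : Nontrivial E := nontrivial_of_ne e 0 (by simp [← norm_ne_zero_iff, he])
  have n_pos : 0 < n := hn ▸ finrank_pos
  obtain ⟨C, hC, hpC⟩ := hp.exists_apply_iteratedFDeriv_comp_mul_log_norm_le n_pos.ne' he
  set ℓ := p (iteratedFDeriv ℝ n (fun y : E => Real.log ‖y‖) e)
  let S (t : ℝ) : ℝ := ∑ i ∈ Finset.Icc 2 n, |iteratedDeriv i φ t|
  have hS : Integrable S := integrable_finsetSum _ fun i hi =>
    (hφi i (by grind) (Finset.mem_Icc.1 hi).2).abs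
  have hφ' : Integrable fun t => ℓ * |deriv φ t| := by
    simpa only [iteratedDeriv_one] using (hφi 1 le_rfl n_pos).abs.const_mul ℓ
  refine ⟨C * ∫ t, S t, mul_nonneg hC (integral_nonneg fun t => Finset.sum_nonneg fun _ _ =>
    abs_nonneg _), fun c hc hc₁ => ?_⟩
  let H (t : ℝ) : ℝ := ℓ * |deriv φ t| + |c| * (C * S t)
  have hCS : Integrable fun t => |c| * (C * S t) := (hS.const_mul C).const_mul |c|
  have hH : Integrable fun s => |c| * H (c * s) :=
    ((hφ'.add hCS).comp_mul_left' hc).const_mul |c|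
  have integral_H : ∫ t, H t = ℓ * (∫ t, |deriv φ t|) + |c| * (C * ∫ t, S t) := by
    simp only [H, integral_add hφ' hCS, integral_const_mul]
  calc ∫ x, p (iteratedFDeriv ℝ n (fun y : E => φ (c * Real.log ‖y‖)) x) ∂μ
      ≤ ∫ x, (‖x‖ ^ finrank ℝ E)⁻¹ • (|c| * H (c * Real.log ‖x‖)) ∂μ := by
        refine integral_mono_of_nonneg (.of_forall fun x => apply_nonneg p _)
          ((integrable_inv_norm_pow_smul_comp_log_norm μ).2 hH) ?_
        filter_upwards [μ.ae_ne 0] with x hx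
        rw [hn]
        exact hpC φ hφ c hc₁ x hx
    _ = n * μ.real (ball 0 1) * ∫ s, |c| * H (c * s) := by
        rw [integral_inv_norm_pow_smul_comp_log_norm μ fun s => |c| * H (c * s), hn, smul_eq_mul]
    _ = n * μ.real (ball 0 1) * (ℓ * (∫ t, |deriv φ t|) + |c| * (C * ∫ t, S t)) := by
        rw [integral_const_mul, Measure.integral_comp_mul_left H, abs_inv, smul_eq_mul,
          mul_inv_cancel_left₀ (abs_ne_zero.2 hc), integral_H]

theorem IsIsometryInvariant.exists_integral_apply_iteratedFDeriv_logCutoff_le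
    (hp : IsIsometryInvariant p) (hn : finrank ℝ E = n) (he : ‖e‖ = 1) :
    ∃ A, 0 ≤ A ∧ ∀ δ : ℝ, 0 < δ → δ ≤ 1 →
      ∫ x, p (iteratedFDeriv ℝ n (logCutoff δ : E → ℝ) x) ∂μ ≤
        n * μ.real (ball 0 1) *
          (p (iteratedFDeriv ℝ n (fun y : E => Real.log ‖y‖) e) + δ * A) := by
  have : Nontrivial E := nontrivial_of_ne e 0 (by simp [← norm_ne_zero_iff, he])
  obtain ⟨A, hA, hbound⟩ := hp.exists_integral_apply_iteratedFDeriv_comp_mul_log_norm_le μ hn he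
    (Real.smoothTransition.contDiff (n := n)) fun _ hi _ =>
      integrable_iteratedDeriv_smoothTransition hi
  refine ⟨A, hA, fun δ hδ hδ₁ => ?_⟩
  have bound_neg := hbound (-δ) (neg_ne_zero.2 hδ.ne') (by rwa [abs_neg, abs_of_pos hδ])
  rw [integral_abs_deriv_smoothTransition, mul_one, abs_neg, abs_of_pos hδ] at bound_neg
  refine (integral_congr_ae ?_).trans_le bound_neg
  filter_upwards [μ.ae_ne 0] with x hx
  rw [((logCutoff_eventuallyEq δ hx).iteratedFDeriv ℝ n).eq_of_nhds]

theorem statement8_general (hn : finrank ℝ E = n) (hp : IsIsometryInvariant p) (he : ‖e‖ = 1)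
    {ε : ℝ} (hε : 0 < ε) :
    ∃ u : E → ℝ, ContDiff ℝ (⊤ : ℕ∞) u ∧ HasCompactSupport u ∧ u ≠ 0 ∧
      ∫ x, p (iteratedFDeriv ℝ n u x) ∂μ <
        (p (iteratedFDeriv ℝ n (fun y : E => Real.log ‖y‖) e) * (n * μ.real (ball 0 1)) + ε) *
          ⨆ x, |u x| := by
  obtain ⟨A, hA, hbound⟩ := hp.exists_integral_apply_iteratedFDeriv_logCutoff_le μ hn he
  obtain ⟨η, hη, hηε⟩ := exists_pos_mul_lt hε (n * μ.real (ball (0 : E) 1) * A)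
  set ℓ := p (iteratedFDeriv ℝ n (fun y : E => Real.log ‖y‖) e)
  set σ : ℝ := n * μ.real (ball (0 : E) 1)
  set δ := min η 1
  have hδ : 0 < δ := lt_min hη one_pos
  have hℓ : 0 ≤ ℓ := apply_nonneg p _
  have hσ : 0 ≤ σ := by positivity
  refine ⟨logCutoff δ, contDiff_logCutoff hδ, hasCompactSupport_logCutoff hδ.le,
    fun h => by simpa [logCutoff_zero] using congrFun h 0, ?_⟩
  calc ∫ x, p (iteratedFDeriv ℝ n (logCutoff δ : E → ℝ) x) ∂μ
      ≤ σ * (ℓ + δ * A) := hbound δ hδ (min_le_right _ _)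
    _ = ℓ * σ + σ * A * δ := by ring
    _ ≤ ℓ * σ + σ * A * η :=
      add_le_add le_rfl (mul_le_mul_of_nonneg_left (min_le_left η 1) (mul_nonneg hσ hA))
    _ < ℓ * σ + ε := by gcongr
    _ ≤ (ℓ * σ + ε) * ⨆ x : E, |logCutoff δ x| :=
      le_mul_of_one_le_right (add_nonneg (mul_nonneg hℓ hσ) hε.le) (one_le_iSup_abs_logCutoff E δ)

end Optimality

/-- optimality of the constant `(√(ℓ_N) ω_{N-1})⁻¹`: for every `ε > 0` there is a
nonzero smooth compactly supported `u` with `∫ |∇^N u| < (√(ℓ_N) ω_{N-1} + ε) ‖u‖_∞`. -/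
theorem statement8 (N : ℕ) (hN : 1 ≤ N) (ε : ℝ) (hε : 0 < ε) :
    ∃ u : EuclideanSpace ℝ (Fin N) → ℝ,
      ContDiff ℝ (⊤ : ℕ∞) u ∧ HasCompactSupport u ∧ u ≠ 0 ∧
        ∫ x, gradNorm N N u x <
          (Real.sqrt (ell N (by omega)) * omegaSphere N + ε) * ⨆ x, |u x| := by
  let e₁ : EuclideanSpace ℝ (Fin N) := EuclideanSpace.single ⟨0, hN⟩ 1
  have sqrt_ell : √(ell N hN) = frobeniusSeminorm _ N (iteratedFDeriv ℝ N (logNorm N) e₁) :=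
    gradNorm_eq_frobeniusSeminorm N N (logNorm N) e₁
  simp only [gradNorm_eq_frobeniusSeminorm, sqrt_ell, omegaSphere]
  exact statement8_general volume finrank_euclideanSpace_fin
    (isIsometryInvariant_frobeniusSeminorm N) (by simp [e₁]) hε
end
end
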